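/- arXiv:2506.15356 — 2 statements merged into one kernel-verified Lean document; each statement's English description precedes it below -/
import Mathlib

section
/- Uniform L¹ bound for the truncated single-layer integral of E_x: For every a ∈ ℝ, every t > 0, every δ ∈ (0,t) and every x ∈ ℝ with x ≠ a, ∫_{t−δ}^{t} |E_x(x − a, t − τ)| dτ ≤ 1/2. -/
open MeasureTheory Real Filter Set Topology intervalIntegral

/-- The Wright function `W(z; -β, δ) = ∑ z^k/(k! Γ(δ - βk))`, with `1/Γ` the
entire reciprocal Gamma function (here `Real.Gamma` vanishes at nonpositive
integers, so division gives the correct value `0`). -/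
noncomputable def wrightW (β δ z : ℝ) : ℝ :=
  ∑' k : ℕ, z ^ k / (k.factorial * Real.Gamma (δ - β * k))

/-- Laplace convolution on `(0, ∞)`. -/
noncomputable def laplaceConv (f g : ℝ → ℝ) : ℝ → ℝ :=
  fun t => ∫ τ in (0:ℝ)..t, f τ * g (t - τ)

/-- Iterated Laplace convolution `h₀ ∗ h₁ ∗ ⋯ ∗ hₙ`. -/
noncomputable def iterConv : (n : ℕ) → (Fin (n + 1) → ℝ → ℝ) → ℝ → ℝ
  | 0, h => h 0
  | n + 1, h => laplaceConv (iterConv n (fun i => h i.castSucc)) (h (Fin.last (n + 1)))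

/-- `S^μ_m(t; -ℓ₁, …, -ℓ_m; -α₁, …, -α_m)` with the decomposition `μ₁ = μ`,
`μ_j = 0` for `j ≥ 2`: the Laplace convolution of
`h_j(t) = t^{μ_j - 1} W(-ℓ_j t^{-α_j}; -α_j, μ_j)`.  Indices run over
`Fin (n+1)`, i.e. the number of terms is `m = n + 1 ≥ 1`. -/
noncomputable def Sconv (n : ℕ) (μ : ℝ) (α ℓ : Fin (n + 1) → ℝ) : ℝ → ℝ :=
  iterConv n (fun j t =>
    t ^ ((if j = 0 then μ else 0) - 1) *
      wrightW (α j) (if j = 0 then μ else 0) (-(ℓ j) * t ^ (-(α j))))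

/-- `Γ^μ₁(x,t)`. -/
noncomputable def Gam1 (n : ℕ) (α lam : Fin (n + 1) → ℝ) (μ x t : ℝ) : ℝ :=
  (4 * Real.pi) ^ (-(1/2 : ℝ)) *
    ∫ p in Set.Ioi (0:ℝ),
      p ^ (-(1/2 : ℝ)) * Real.exp (-(|x| ^ 2) / (4 * p)) *
        Sconv n μ α (fun j => lam j * p) t

/-- The kernel `E(x,t) = Γ⁰₁(x,t)`. -/
noncomputable def kerE (n : ℕ) (α lam : Fin (n + 1) → ℝ) (x t : ℝ) : ℝ :=
  Gam1 n α lam 0 x t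

/-- `E_x`, the spatial derivative of `E`. -/
noncomputable def kerEx (n : ℕ) (α lam : Fin (n + 1) → ℝ) (x t : ℝ) : ℝ :=
  deriv (fun y => kerE n α lam y t) x

/-- `E_xx`, the second spatial derivative of `E`. -/
noncomputable def kerExx (n : ℕ) (α lam : Fin (n + 1) → ℝ) (x t : ℝ) : ℝ :=
  deriv (fun y => kerEx n α lam y t) x

/-- The kernel `Z(x,t) = ∑ₖ λₖ Γ^{1-αₖ}₁(x,t)`. -/
noncomputable def kerZ (n : ℕ) (α lam : Fin (n + 1) → ℝ) (x t : ℝ) : ℝ :=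
  ∑ k : Fin (n + 1), lam k * Gam1 n α lam (1 - α k) x t

/-- `Z_x`, the spatial derivative of `Z`. -/
noncomputable def kerZx (n : ℕ) (α lam : Fin (n + 1) → ℝ) (x t : ℝ) : ℝ :=
  deriv (fun y => kerZ n α lam y t) x

/-- `Z_xx`, the second spatial derivative of `Z`. -/
noncomputable def kerZxx (n : ℕ) (α lam : Fin (n + 1) → ℝ) (x t : ℝ) : ℝ :=
  deriv (fun y => kerZx n α lam y t) x

/-- The `j`-th Taylor coefficient `(-1)^j * binom(b, j)` of `(1 - z)^b`. -/
noncomputable def oneSubCoeff (b : ℝ) (j : ℕ) : ℝ :=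
  ∏ i ∈ Finset.range j, ((i : ℝ) - b) / (i + 1)

@[simp] lemma oneSubCoeff_zero_right (b : ℝ) : oneSubCoeff b 0 = 1 := by simp [oneSubCoeff]

lemma oneSubCoeff_succ (b : ℝ) (j : ℕ) :
    oneSubCoeff b (j + 1) = oneSubCoeff b j * (((j : ℝ) - b) / (j + 1)) := by
  rw [oneSubCoeff, oneSubCoeff, Finset.prod_range_succ]

lemma oneSubCoeff_eq_choose (b : ℝ) (j : ℕ) :
    oneSubCoeff b j = (-1) ^ j * Ring.choose b j := by
  induction j with
  | zero => simp
  | succ j ih =>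
    rw [oneSubCoeff_succ, ih, Ring.choose_eq_smul, Ring.choose_eq_smul,
      descPochhammer_succ_right, Polynomial.smeval_mul, Nat.factorial_succ]
    have h1 : (j.factorial : ℝ) ≠ 0 := by positivity
    have h2 : (j : ℝ) + 1 ≠ 0 := by positivity
    simp only [smul_eq_mul, Polynomial.smeval_sub, Polynomial.smeval_X, Polynomial.smeval_natCast]
    push_cast
    field_simp
    simp
    ring

/-- The power series `(1 - X)^b`. -/
noncomputable def oneSubSeries (b : ℝ) : PowerSeries ℝ := PowerSeries.mk (oneSubCoeff b)

lemma oneSubSeries_eq_rescale (b : ℝ) :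
    oneSubSeries b = PowerSeries.rescale (-1) (PowerSeries.binomialSeries ℝ b) := by
  ext j
  simp [oneSubSeries, oneSubCoeff_eq_choose]

lemma oneSubSeries_mul_natCast (b : ℝ) (k : ℕ) :
    oneSubSeries (b * k) = oneSubSeries b ^ k := by
  induction k with
  | zero => simp [oneSubSeries_eq_rescale]
  | succ k ih =>
    rw [pow_succ, ← ih, oneSubSeries_eq_rescale, oneSubSeries_eq_rescale, oneSubSeries_eq_rescale,
      ← map_mul, ← PowerSeries.binomialSeries_add]
    push_cast
    ring_nf

/-- The generating series `1 - (1 - X)^α` of the Sibuya distribution. -/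
noncomputable def sibuyaSeries (α : ℝ) : PowerSeries ℝ := 1 - oneSubSeries α

lemma sum_range_oneSubCoeff (α : ℝ) (J : ℕ) :
    ∑ j ∈ Finset.range (J + 1), oneSubCoeff α j =
      ∏ i ∈ Finset.range J, ((i : ℝ) + 1 - α) / (i + 1) := by
  have key : ∀ J : ℕ, oneSubCoeff α (J + 1) =
      (∏ i ∈ Finset.range J, ((i : ℝ) + 1 - α) / (i + 1)) * (-α / (J + 1)) := by
    intro J
    induction J with
    | zero => simp [oneSubCoeff]
    | succ J ih =>
      rw [oneSubCoeff_succ, ih, Finset.prod_range_succ]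
      have h2 : (J : ℝ) + 1 ≠ 0 := by positivity
      have h3 : (J : ℝ) + 1 + 1 ≠ 0 := by positivity
      push_cast
      field_simp
  induction J with
  | zero => simp
  | succ J ih =>
    rw [Finset.sum_range_succ, ih, key, Finset.prod_range_succ]
    have h2 : (J : ℝ) + 1 ≠ 0 := by positivity
    field_simp
    ring

lemma coeff_sibuyaSeries_zero (α : ℝ) : PowerSeries.coeff 0 (sibuyaSeries α) = 0 := by
  simp [sibuyaSeries, oneSubSeries]

lemma coeff_sibuyaSeries_nonneg {α : ℝ} (h0 : 0 ≤ α) (h1 : α ≤ 1) (j : ℕ) :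
    0 ≤ PowerSeries.coeff j (sibuyaSeries α) := by
  rcases j with _ | j
  · simp [coeff_sibuyaSeries_zero]
  · have h : oneSubCoeff α (j + 1) ≤ 0 := by
      rw [oneSubCoeff, Finset.prod_range_succ']
      refine mul_nonpos_of_nonneg_of_nonpos (Finset.prod_nonneg fun i _ => ?_) ?_
      · push_cast
        have : (0 : ℝ) ≤ i := by positivity
        exact div_nonneg (by linarith) (by linarith)
      · simpa using h0
    simpa [sibuyaSeries, oneSubSeries, PowerSeries.coeff_one] using h

lemma sum_coeff_sibuyaSeries_le_one {α : ℝ} (h1 : α ≤ 1) (J : ℕ) :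
    ∑ j ∈ Finset.range (J + 1), PowerSeries.coeff j (sibuyaSeries α) ≤ 1 := by
  have h := sum_range_oneSubCoeff α J
  have hnn : 0 ≤ ∏ i ∈ Finset.range J, ((i : ℝ) + 1 - α) / (i + 1) := by
    refine Finset.prod_nonneg fun i _ => ?_
    have : (0 : ℝ) ≤ i := by positivity
    exact div_nonneg (by linarith) (by linarith)
  simp only [sibuyaSeries, oneSubSeries, map_sub, PowerSeries.coeff_mk, PowerSeries.coeff_one,
    Finset.sum_sub_distrib, Finset.sum_ite_eq', h]
  simpa using hnn

lemma PowerSeries.coeff_pow_nonneg {A : PowerSeries ℝ} (hA : ∀ j, 0 ≤ PowerSeries.coeff j A)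
    (i j : ℕ) : 0 ≤ PowerSeries.coeff j (A ^ i) := by
  induction i generalizing j with
  | zero => rw [pow_zero, PowerSeries.coeff_one]; split_ifs <;> simp
  | succ i ih =>
    rw [pow_succ, PowerSeries.coeff_mul]
    exact Finset.sum_nonneg fun p _ => mul_nonneg (ih _) (hA _)

lemma PowerSeries.sum_coeff_pow_le_one {A : PowerSeries ℝ} (hA : ∀ j, 0 ≤ PowerSeries.coeff j A)
    (J : ℕ) (hsum : ∑ j ∈ Finset.range (J + 1), PowerSeries.coeff j A ≤ 1) (i : ℕ) :
    ∑ j ∈ Finset.range (J + 1), PowerSeries.coeff j (A ^ i) ≤ 1 := by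
  induction i with
  | zero => simp [PowerSeries.coeff_one]
  | succ i ih =>
    have hle : ∑ j ∈ Finset.range (J + 1), PowerSeries.coeff j (A ^ (i + 1)) ≤
        (∑ j ∈ Finset.range (J + 1), PowerSeries.coeff j (A ^ i)) *
          ∑ j ∈ Finset.range (J + 1), PowerSeries.coeff j A := by
      rw [Finset.sum_mul_sum, ← Finset.sum_product']
      refine le_trans (Finset.sum_le_sum fun j hj => ?_)
        (Finset.sum_fiberwise_le_sum_of_sum_fiber_nonneg (g := fun p : ℕ × ℕ => p.1 + p.2)
          (t := Finset.range (J + 1)) fun j _ => Finset.sum_nonneg fun p _ =>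
            mul_nonneg (PowerSeries.coeff_pow_nonneg hA i _) (hA _))
      rw [pow_succ, PowerSeries.coeff_mul]
      refine (Finset.sum_congr ?_ fun _ _ => rfl).le
      ext p
      rw [Finset.HasAntidiagonal.mem_antidiagonal]
      simp only [Finset.mem_filter, Finset.mem_product, Finset.mem_range] at hj ⊢
      omega
    exact hle.trans (mul_le_one₀ ih (Finset.sum_nonneg fun j _ => hA j) hsum)

/-- The `j`-th Taylor coefficient of `exp (-L (1 - z)^α)`. -/
noncomputable def stableWeight (α L : ℝ) (j : ℕ) : ℝ :=
  Real.exp (-L) * ∑ i ∈ Finset.range (j + 1),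
    L ^ i / i.factorial * PowerSeries.coeff j (sibuyaSeries α ^ i)

lemma coeff_sibuyaSeries_pow_eq_zero (α : ℝ) {i j : ℕ} (h : j < i) :
    PowerSeries.coeff j (sibuyaSeries α ^ i) = 0 := by
  have hX : PowerSeries.X ∣ sibuyaSeries α := by
    rw [PowerSeries.X_dvd_iff, ← PowerSeries.coeff_zero_eq_constantCoeff_apply]
    exact coeff_sibuyaSeries_zero α
  exact PowerSeries.X_pow_dvd_iff.mp (pow_dvd_pow_of_dvd hX i) j h

lemma oneSubCoeff_mul_natCast (α : ℝ) (k j : ℕ) :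
    oneSubCoeff (α * k) j = ∑ i ∈ Finset.range (j + 1),
      (k.choose i : ℝ) * (-1) ^ i * PowerSeries.coeff j (sibuyaSeries α ^ i) := by
  have h : oneSubCoeff (α * k) j = PowerSeries.coeff j ((-sibuyaSeries α + 1) ^ k) := by
    rw [show -sibuyaSeries α + 1 = oneSubSeries α by simp [sibuyaSeries],
      ← oneSubSeries_mul_natCast]
    simp [oneSubSeries]
  rw [h, add_pow, map_sum]
  have h2 : ∀ i, PowerSeries.coeff j ((-sibuyaSeries α) ^ i * 1 ^ (k - i) *
      (k.choose i : PowerSeries ℝ)) =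
      (k.choose i : ℝ) * (-1) ^ i * PowerSeries.coeff j (sibuyaSeries α ^ i) := by
    intro i
    rw [neg_pow, one_pow, mul_one, mul_comm, ← map_natCast (PowerSeries.C (R := ℝ)),
      PowerSeries.coeff_C_mul,
      show (-1 : PowerSeries ℝ) ^ i = PowerSeries.C ((-1 : ℝ) ^ i) by simp,
      PowerSeries.coeff_C_mul, mul_assoc]
  simp only [h2]
  rcases le_total k j with hkj | hkj
  · refine Finset.sum_subset (Finset.range_mono (by omega)) fun i _ hi => ?_
    rw [Nat.choose_eq_zero_of_lt (by simpa using hi)]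
    simp
  · refine (Finset.sum_subset (Finset.range_mono (by omega)) fun i _ hi => ?_).symm
    rw [coeff_sibuyaSeries_pow_eq_zero α (by simpa using hi)]
    simp

lemma hasSum_pow_div_factorial_mul_choose (x : ℝ) (i : ℕ) :
    HasSum (fun k : ℕ => x ^ k / k.factorial * (k.choose i : ℝ))
      (x ^ i / i.factorial * Real.exp x) := by
  have h := (NormedSpace.expSeries_div_hasSum_exp (𝔸 := ℝ) x).mul_left (x ^ i / i.factorial)
  rw [← Real.exp_eq_exp_ℝ] at h
  rw [← hasSum_nat_add_iff' i, Finset.sum_eq_zero, sub_zero]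
  · refine h.congr_fun fun n => ?_
    have h1 : (((n + i).choose i : ℕ) : ℝ) * i.factorial * n.factorial = (n + i).factorial := by
      have := Nat.add_choose_mul_factorial_mul_factorial n i
      rw [← this]
      push_cast
      ring
    rw [← h1, pow_add]
    have h2 : (((n + i).choose i : ℕ) : ℝ) ≠ 0 := by
      exact_mod_cast (Nat.choose_pos (Nat.le_add_left i n)).ne'
    have h3 := Nat.cast_ne_zero (R := ℝ).mpr i.factorial_ne_zero
    have h4 := Nat.cast_ne_zero (R := ℝ).mpr n.factorial_ne_zero
    field_simp
  · intro k hk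
    rw [Nat.choose_eq_zero_of_lt (by simpa using hk)]
    simp

lemma hasSum_stableWeight (α L : ℝ) (j : ℕ) :
    HasSum (fun k : ℕ => (-L) ^ k / k.factorial * oneSubCoeff (α * k) j)
      (stableWeight α L j) := by
  have h := hasSum_sum (s := Finset.range (j + 1)) fun i _ =>
    (hasSum_pow_div_factorial_mul_choose (-L) i).mul_right
      ((-1) ^ i * PowerSeries.coeff j (sibuyaSeries α ^ i))
  have h1 : (fun k : ℕ => (-L) ^ k / k.factorial * oneSubCoeff (α * k) j) = fun k : ℕ =>
      ∑ i ∈ Finset.range (j + 1), (-L) ^ k / k.factorial * (k.choose i : ℝ) *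
        ((-1) ^ i * PowerSeries.coeff j (sibuyaSeries α ^ i)) := by
    ext k
    rw [oneSubCoeff_mul_natCast, Finset.mul_sum]
    exact Finset.sum_congr rfl fun i _ => by ring
  have h2 : stableWeight α L j = ∑ i ∈ Finset.range (j + 1), (-L) ^ i / i.factorial *
      Real.exp (-L) * ((-1) ^ i * PowerSeries.coeff j (sibuyaSeries α ^ i)) := by
    rw [stableWeight, Finset.mul_sum]
    refine Finset.sum_congr rfl fun i _ => ?_
    have : (-1 : ℝ) ^ i * (-1) ^ i = 1 := by rw [← mul_pow]; simp
    rw [neg_pow L]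
    linear_combination (-Real.exp (-L) * L ^ i / i.factorial *
      PowerSeries.coeff j (sibuyaSeries α ^ i)) * this
  rwa [h1, h2]

lemma stableWeight_nonneg {α L : ℝ} (h0 : 0 ≤ α) (h1 : α ≤ 1) (hL : 0 ≤ L) (j : ℕ) :
    0 ≤ stableWeight α L j := by
  refine mul_nonneg (Real.exp_pos _).le (Finset.sum_nonneg fun i _ => mul_nonneg (by positivity) ?_)
  exact PowerSeries.coeff_pow_nonneg (coeff_sibuyaSeries_nonneg h0 h1) i j

lemma sum_stableWeight_le_one {α L : ℝ} (h0 : 0 ≤ α) (h1 : α ≤ 1) (hL : 0 ≤ L) (J : ℕ) :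
    ∑ j ∈ Finset.range J, stableWeight α L j ≤ 1 := by
  rcases J with _ | J
  · simp
  have hnn := coeff_sibuyaSeries_nonneg h0 h1
  calc ∑ j ∈ Finset.range (J + 1), stableWeight α L j
      ≤ ∑ j ∈ Finset.range (J + 1), Real.exp (-L) * ∑ i ∈ Finset.range (J + 1),
          L ^ i / i.factorial * PowerSeries.coeff j (sibuyaSeries α ^ i) := by
        refine Finset.sum_le_sum fun j hj => mul_le_mul_of_nonneg_left ?_ (Real.exp_pos _).le
        refine Finset.sum_le_sum_of_subset_of_nonneg (Finset.range_mono ?_) fun i _ _ =>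
          mul_nonneg (by positivity) (PowerSeries.coeff_pow_nonneg hnn i j)
        simpa using hj
    _ = Real.exp (-L) * ∑ i ∈ Finset.range (J + 1), L ^ i / i.factorial *
          ∑ j ∈ Finset.range (J + 1), PowerSeries.coeff j (sibuyaSeries α ^ i) := by
        rw [← Finset.mul_sum, Finset.sum_comm]
        simp only [Finset.mul_sum]
    _ ≤ Real.exp (-L) * ∑ i ∈ Finset.range (J + 1), L ^ i / i.factorial := by
        refine mul_le_mul_of_nonneg_left (Finset.sum_le_sum fun i _ => ?_) (Real.exp_pos _).le
        exact mul_le_of_le_one_right (by positivity)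
          (PowerSeries.sum_coeff_pow_le_one hnn J (sum_coeff_sibuyaSeries_le_one h1 J) i)
    _ ≤ Real.exp (-L) * Real.exp L :=
        mul_le_mul_of_nonneg_left (Real.sum_le_exp_of_nonneg hL _) (Real.exp_pos _).le
    _ = 1 := by rw [← Real.exp_add]; simp

lemma abs_oneSubCoeff_le_pow_div {b : ℝ} (hb : 0 ≤ b) (j : ℕ) (hj : (j : ℝ) ≤ b + 1) :
    |oneSubCoeff b j| ≤ b ^ j / j.factorial := by
  induction j with
  | zero => simp
  | succ j ih =>
    push_cast at hj
    have hj0 : (0 : ℝ) ≤ j := by positivity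
    rw [oneSubCoeff_succ, abs_mul, abs_div, abs_of_nonneg (by positivity : (0 : ℝ) ≤ j + 1),
      Nat.factorial_succ, pow_succ]
    push_cast
    rw [mul_comm ((j : ℝ) + 1), mul_div_mul_comm]
    have h : |(j : ℝ) - b| ≤ b := by rw [abs_le]; constructor <;> linarith
    exact mul_le_mul (ih (by linarith)) (by gcongr) (by positivity) (by positivity)

lemma sub_div_mul_rpow_le {b : ℝ} (hb : 0 ≤ b) (j : ℕ) :
    ((j : ℝ) - b) / (j + 1) * ((j : ℝ) + 2) ^ (b + 1) ≤ ((j : ℝ) + 1) ^ (b + 1) := by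
  have hj1 : (0 : ℝ) < j + 1 := by positivity
  have h1 : ((j : ℝ) - b) / (j + 1) ≤ Real.exp (-(b + 1) / (j + 1)) := by
    refine le_trans (le_of_eq ?_) (Real.add_one_le_exp _)
    field_simp
    ring
  have h2 : ((j : ℝ) + 2) ^ (b + 1) ≤ ((j : ℝ) + 1) ^ (b + 1) * Real.exp ((b + 1) / (j + 1)) := by
    have h3 : (j : ℝ) + 2 ≤ (j + 1) * Real.exp (1 / (j + 1)) := by
      have := mul_le_mul_of_nonneg_left (Real.add_one_le_exp (1 / ((j : ℝ) + 1))) hj1.le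
      refine le_trans (le_of_eq ?_) this
      field_simp
      ring
    refine (Real.rpow_le_rpow (by positivity) h3 (by linarith)).trans (le_of_eq ?_)
    rw [Real.mul_rpow hj1.le (Real.exp_pos _).le, ← Real.exp_mul]
    ring_nf
  calc _ ≤ Real.exp (-(b + 1) / (j + 1)) *
        (((j : ℝ) + 1) ^ (b + 1) * Real.exp ((b + 1) / (j + 1))) :=
        mul_le_mul h1 h2 (by positivity) (Real.exp_pos _).le
    _ = ((j : ℝ) + 1) ^ (b + 1) *
        (Real.exp (-(b + 1) / (j + 1)) * Real.exp ((b + 1) / (j + 1))) := by ring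
    _ = _ := by rw [← Real.exp_add, neg_div, neg_add_cancel, Real.exp_zero, mul_one]

lemma abs_oneSubCoeff_mul_rpow_le {b : ℝ} (hb : 0 ≤ b) (j : ℕ) :
    |oneSubCoeff b j| * ((j : ℝ) + 1) ^ (b + 1) ≤ Real.exp b * (b + 2) ^ (b + 1) := by
  have small : ∀ j : ℕ, (j : ℝ) ≤ b + 1 →
      |oneSubCoeff b j| * ((j : ℝ) + 1) ^ (b + 1) ≤ Real.exp b * (b + 2) ^ (b + 1) := by
    intro j hj
    refine mul_le_mul ((abs_oneSubCoeff_le_pow_div hb j hj).trans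
      (Real.pow_div_factorial_le_exp b hb j)) ?_ (by positivity) (Real.exp_pos _).le
    exact Real.rpow_le_rpow (by positivity) (by linarith) (by linarith)
  induction j with
  | zero => exact small 0 (by simp; linarith)
  | succ j ih =>
    rcases le_or_gt (((j + 1 : ℕ) : ℝ)) (b + 1) with h | h
    · exact small _ h
    · push_cast at h ⊢
      refine le_trans ?_ ih
      have hj : b ≤ j := by linarith
      rw [oneSubCoeff_succ, abs_mul, mul_assoc,
        abs_of_nonneg (div_nonneg (sub_nonneg.mpr hj) (by positivity) :
          (0 : ℝ) ≤ ((j : ℝ) - b) / (j + 1)), show (j : ℝ) + 1 + 1 = j + 2 by ring]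
      exact mul_le_mul_of_nonneg_left (sub_div_mul_rpow_le hb j) (abs_nonneg _)

lemma summable_pow_div_factorial_mul_rpow {α : ℝ} (h0 : 0 < α) (h1 : α < 1) {C : ℝ} (hC : 0 ≤ C) :
    Summable fun k : ℕ => C ^ k / k.factorial *
      (Real.exp (α * k) * (α * k + 2) ^ (α * k + 1)) := by
  set ε : ℝ := 1 / (2 * (C * Real.exp 1 * Real.exp 1 + 1)) with hε
  have hε0 : 0 < ε := by positivity
  have hlit : ∀ᶠ k : ℕ in atTop, ((k : ℝ) + 2) ^ α ≤ ε * (k + 2) := by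
    have ht : Tendsto (fun k : ℕ => (k : ℝ) + 2) atTop atTop :=
      tendsto_atTop_add_const_right _ _ tendsto_natCast_atTop_atTop
    have h := (tendsto_rpow_neg_atTop (sub_pos.mpr h1)).comp ht
    filter_upwards [h.eventually (gt_mem_nhds hε0)] with k hk
    have hk2 : (0 : ℝ) < k + 2 := by positivity
    calc ((k : ℝ) + 2) ^ α = ((k : ℝ) + 2) ^ (-(1 - α)) * (k + 2) := by
          rw [← Real.rpow_add_one hk2.ne']; ring_nf
      _ ≤ ε * (k + 2) := mul_le_mul_of_nonneg_right hk.le hk2.le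
  have hs : Summable fun k : ℕ => Real.exp 2 * (((k : ℝ) + 2) * (1 / 2) ^ k) := by
    refine Summable.mul_left _ ?_
    simp only [add_mul]
    refine Summable.add ?_ ((summable_geometric_of_lt_one (by norm_num) (by norm_num)).mul_left 2)
    simpa using summable_pow_mul_geometric_of_norm_lt_one (R := ℝ) 1 (r := 1 / 2) (by norm_num)
  refine hs.of_norm_bounded_eventually_nat ?_
  filter_upwards [hlit] with k hk
  have hk0 : (0 : ℝ) ≤ k := by positivity
  rw [Real.norm_of_nonneg (by positivity)]
  have e1 : Real.exp (α * k) ≤ Real.exp 1 ^ k := by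
    rw [← Real.exp_nat_mul]
    exact Real.exp_le_exp.mpr (by nlinarith)
  have e2 : (α * k + 2) ^ (α * k + 1) ≤ ((k : ℝ) + 2) * (ε ^ k * (k + 2) ^ k) := by
    calc (α * k + 2) ^ (α * k + 1) ≤ ((k : ℝ) + 2) ^ (α * k + 1) :=
          Real.rpow_le_rpow (by positivity) (by nlinarith) (by positivity)
      _ = ((k : ℝ) + 2) * (((k : ℝ) + 2) ^ α) ^ k := by
          rw [Real.rpow_add (by positivity), Real.rpow_one, Real.rpow_mul (by positivity),
            Real.rpow_natCast, mul_comm]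
      _ ≤ ((k : ℝ) + 2) * (ε * (k + 2)) ^ k := by gcongr
      _ = _ := by rw [mul_pow]
  have e3 : ((k : ℝ) + 2) ^ k / k.factorial ≤ Real.exp 2 * Real.exp 1 ^ k := by
    refine (Real.pow_div_factorial_le_exp _ (by positivity) k).trans (le_of_eq ?_)
    rw [← Real.exp_nat_mul, ← Real.exp_add]
    ring_nf
  have e4 : C * Real.exp 1 * ε * Real.exp 1 ≤ 1 / 2 := by
    rw [hε, mul_one_div, div_mul_eq_mul_div, div_le_div_iff₀ (by positivity) (by positivity)]
    nlinarith [Real.exp_pos 1]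
  calc _ ≤ C ^ k / k.factorial * (Real.exp 1 ^ k * (((k : ℝ) + 2) * (ε ^ k * (k + 2) ^ k))) := by
        gcongr
    _ = C ^ k * Real.exp 1 ^ k * ε ^ k * ((k : ℝ) + 2) * ((k + 2) ^ k / k.factorial) := by ring
    _ ≤ C ^ k * Real.exp 1 ^ k * ε ^ k * ((k : ℝ) + 2) * (Real.exp 2 * Real.exp 1 ^ k) := by
        gcongr
    _ = Real.exp 2 * (((k : ℝ) + 2) * (C * Real.exp 1 * ε * Real.exp 1) ^ k) := by
        simp only [mul_pow]; ring
    _ ≤ _ := by gcongr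

lemma tendsto_rpow_mul_oneSubCoeff (b : ℝ) :
    Tendsto (fun j : ℕ => (j : ℝ) ^ b * (j - b) * oneSubCoeff b j) atTop
      (𝓝 (Real.Gamma (-b))⁻¹) := by
  by_cases hG : Real.Gamma (-b) = 0
  · obtain ⟨m, hm⟩ := (Real.Gamma_eq_zero_iff _).mp hG
    have hbm : b = m := by linarith
    rw [hG, inv_zero]
    refine tendsto_const_nhds.congr' ?_
    filter_upwards [eventually_gt_atTop m] with j hj
    rw [oneSubCoeff, Finset.prod_eq_zero (Finset.mem_range.mpr hj) (by simp [hbm]), mul_zero]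
  · refine ((Real.GammaSeq_tendsto_Gamma (-b)).inv₀ hG).congr' ?_
    filter_upwards [eventually_gt_atTop 0] with j hj
    have hj' : (0 : ℝ) < j := by exact_mod_cast hj
    rw [Real.GammaSeq, oneSubCoeff, Finset.prod_div_distrib, Finset.prod_range_succ,
      Real.rpow_neg hj'.le, ← Finset.prod_range_add_one_eq_factorial]
    push_cast
    have : (j : ℝ) ^ b ≠ 0 := (Real.rpow_pos_of_pos hj' b).ne'
    simp only [neg_add_eq_sub]
    rw [inv_div]
    field_simp

lemma tendsto_natCast_rpow_mul_oneSubCoeff_floor (b : ℝ) {t : ℝ} (ht : 0 < t) :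
    Tendsto (fun N : ℕ => (N : ℝ) ^ (b + 1) * oneSubCoeff b ⌊(N : ℝ) * t⌋₊) atTop
      (𝓝 (t ^ (-(b + 1)) * (Real.Gamma (-b))⁻¹)) := by
  have hfl : Tendsto (fun N : ℕ => ⌊(N : ℝ) * t⌋₊) atTop atTop :=
    tendsto_nat_floor_atTop.comp (tendsto_natCast_atTop_atTop.atTop_mul_const ht)
  have hr : Tendsto (fun N : ℕ => ((⌊(N : ℝ) * t⌋₊ : ℕ) : ℝ) / N) atTop (𝓝 t) := by
    have := (tendsto_nat_floor_mul_div_atTop ht.le).comp (tendsto_natCast_atTop_atTop (R := ℝ))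
    simpa [Function.comp_def, mul_comm] using this
  have hr2 : Tendsto (fun N : ℕ => ((⌊(N : ℝ) * t⌋₊ : ℕ) : ℝ) / N - b / N) atTop (𝓝 t) := by
    simpa using hr.sub (tendsto_const_div_atTop_nhds_zero_nat b)
  have hlim := ((hr.rpow_const (p := -b) (Or.inl ht.ne')).mul (hr2.inv₀ ht.ne')).mul
    ((tendsto_rpow_mul_oneSubCoeff b).comp hfl)
  have he : t ^ (-b) * t⁻¹ = t ^ (-(b + 1)) := by
    rw [← Real.rpow_neg_one, ← Real.rpow_add ht]; ring_nf
  rw [he] at hlim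
  refine hlim.congr' ?_
  filter_upwards [eventually_gt_atTop 0, hfl.eventually (eventually_gt_atTop (max 0 ⌈b⌉₊))]
    with N hN hj
  simp only [Function.comp_apply]
  set j := ⌊(N : ℝ) * t⌋₊
  have hN' : (0 : ℝ) < N := by exact_mod_cast hN
  have hj0 : (0 : ℝ) < j := by exact_mod_cast (le_max_left _ _).trans_lt hj
  have hjb : b < j := (Nat.le_ceil b).trans_lt (by exact_mod_cast (le_max_right _ _).trans_lt hj)
  have hjb' : (j : ℝ) - b ≠ 0 := by linarith
  rw [← sub_div, Real.rpow_neg (by positivity), Real.div_rpow hj0.le hN'.le,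
    Real.rpow_add hN', Real.rpow_one]
  have h1 := (Real.rpow_pos_of_pos hj0 b).ne'
  have h2 := (Real.rpow_pos_of_pos hN' b).ne'
  field_simp

lemma natCast_rpow_mul_abs_oneSubCoeff_floor_le {b : ℝ} (hb : 0 ≤ b) {t : ℝ} (ht : 0 < t) (N : ℕ) :
    (N : ℝ) ^ (b + 1) * |oneSubCoeff b ⌊(N : ℝ) * t⌋₊| ≤
      t ^ (-(b + 1)) * (Real.exp b * (b + 2) ^ (b + 1)) := by
  have h1 : (N : ℝ) ^ (b + 1) ≤ t ^ (-(b + 1)) * ((⌊(N : ℝ) * t⌋₊ : ℕ) + 1 : ℝ) ^ (b + 1) := by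
    rw [Real.rpow_neg ht.le, ← Real.inv_rpow ht.le, ← Real.mul_rpow (by positivity) (by positivity)]
    refine Real.rpow_le_rpow (by positivity) ?_ (by linarith)
    rw [inv_mul_eq_div, le_div_iff₀ ht]
    exact (Nat.lt_floor_add_one _).le
  calc _ ≤ t ^ (-(b + 1)) * ((⌊(N : ℝ) * t⌋₊ : ℕ) + 1 : ℝ) ^ (b + 1) *
        |oneSubCoeff b ⌊(N : ℝ) * t⌋₊| := mul_le_mul_of_nonneg_right h1 (abs_nonneg _)
    _ = t ^ (-(b + 1)) * (|oneSubCoeff b ⌊(N : ℝ) * t⌋₊| *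
        ((⌊(N : ℝ) * t⌋₊ : ℕ) + 1 : ℝ) ^ (b + 1)) := by ring
    _ ≤ _ := mul_le_mul_of_nonneg_left (abs_oneSubCoeff_mul_rpow_le hb _) (by positivity)

lemma summable_wrightW_zero {α : ℝ} (h0 : 0 < α) (h1 : α < 1) (z : ℝ) :
    Summable fun k : ℕ => z ^ k / (k.factorial * Real.Gamma (0 - α * k)) := by
  refine (summable_pow_div_factorial_mul_rpow h0 h1 (abs_nonneg z)).of_norm_bounded fun k => ?_
  have hb : (0 : ℝ) ≤ α * k := by positivity
  have h := le_of_tendsto (tendsto_natCast_rpow_mul_oneSubCoeff_floor (α * k) one_pos).abs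
    (Eventually.of_forall fun N => by
      rw [abs_mul, abs_of_nonneg (by positivity)]
      exact natCast_rpow_mul_abs_oneSubCoeff_floor_le hb one_pos N)
  simp only [Real.one_rpow, one_mul] at h
  rw [zero_sub, div_mul_eq_div_div, div_eq_mul_inv _ (Real.Gamma _), norm_mul, norm_div, norm_pow,
    Real.norm_natCast, Real.norm_eq_abs, Real.norm_eq_abs]
  exact mul_le_mul_of_nonneg_left h (by positivity)

lemma measurable_wrightW_zero {α : ℝ} (h0 : 0 < α) (h1 : α < 1) : Measurable (wrightW α 0) := by
  refine measurable_of_tendsto_metrizable (f := fun n z => ∑ k ∈ Finset.range n,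
    z ^ k / (k.factorial * Real.Gamma (0 - α * k))) (fun n => by fun_prop) ?_
  rw [tendsto_pi_nhds]
  exact fun z => (summable_wrightW_zero h0 h1 z).hasSum.tendsto_sum_nat

lemma tendsto_natCast_mul_stableWeight {α : ℝ} (h0 : 0 < α) (h1 : α < 1) {l t : ℝ} (hl : 0 ≤ l)
    (ht : 0 < t) :
    Tendsto (fun N : ℕ => (N : ℝ) * stableWeight α (l * (N : ℝ) ^ α) ⌊(N : ℝ) * t⌋₊) atTop
      (𝓝 (t⁻¹ * wrightW α 0 (-l * t ^ (-α)))) := by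
  have ht1 : ∀ k : ℕ, t ^ (-(α * k + 1)) = t⁻¹ * (t ^ (-α)) ^ k := by
    intro k
    rw [← Real.rpow_natCast (t ^ (-α)), ← Real.rpow_mul ht.le, ← Real.rpow_neg_one,
      ← Real.rpow_add ht]
    ring_nf
  have key := tendsto_tsum_of_dominated_convergence (𝓕 := atTop)
    (f := fun (N : ℕ) (k : ℕ) => (-l) ^ k / k.factorial *
      ((N : ℝ) ^ (α * k + 1) * oneSubCoeff (α * k) ⌊(N : ℝ) * t⌋₊))
    (g := fun k : ℕ => (-l) ^ k / k.factorial * (t ^ (-(α * k + 1)) * (Real.Gamma (-(α * k)))⁻¹))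
    (((summable_pow_div_factorial_mul_rpow h0 h1
      (by positivity : (0 : ℝ) ≤ l * t ^ (-α))).mul_left t⁻¹))
    (fun k => (tendsto_natCast_rpow_mul_oneSubCoeff_floor (α * k) ht).const_mul _)
    (Eventually.of_forall fun N k => by
      have hb : (0 : ℝ) ≤ α * k := by positivity
      have h := natCast_rpow_mul_abs_oneSubCoeff_floor_le hb ht N
      rw [norm_mul, norm_mul, norm_div, norm_pow, norm_neg, Real.norm_natCast,
        Real.norm_of_nonneg hl, Real.norm_of_nonneg (by positivity), Real.norm_eq_abs]
      refine (mul_le_mul_of_nonneg_left h (by positivity)).trans (le_of_eq ?_)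
      rw [ht1, mul_pow]
      ring)
  have hlim : t⁻¹ * wrightW α 0 (-l * t ^ (-α)) = ∑' k : ℕ, (-l) ^ k / k.factorial *
      (t ^ (-(α * k + 1)) * (Real.Gamma (-(α * k)))⁻¹) := by
    rw [wrightW, ← tsum_mul_left]
    refine tsum_congr fun k => ?_
    rw [ht1, mul_pow, zero_sub, div_mul_eq_div_div, div_eq_mul_inv _ (Real.Gamma _)]
    ring
  rw [hlim]
  refine key.congr' ?_
  filter_upwards [eventually_gt_atTop 0] with N hN
  have hN' : (0 : ℝ) < N := by exact_mod_cast hN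
  rw [← (hasSum_stableWeight α _ _).tsum_eq, ← tsum_mul_left]
  refine tsum_congr fun k => ?_
  rw [Real.rpow_add hN', Real.rpow_one, Real.rpow_mul hN'.le, Real.rpow_natCast, ← neg_mul, mul_pow]
  ring

lemma lintegral_natCast_mul_stableWeight_le_one {α L : ℝ} (h0 : 0 ≤ α) (h1 : α ≤ 1) (hL : 0 ≤ L)
    (N : ℕ) (hN : 0 < N) :
    ∫⁻ t in Ioi (0 : ℝ), ‖(N : ℝ) * stableWeight α L ⌊(N : ℝ) * t⌋₊‖ₑ ≤ 1 := by
  have hN' : (0 : ℝ) < N := by exact_mod_cast hN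
  have hsub : Ioi (0 : ℝ) ⊆ ⋃ j : ℕ, Ico ((j : ℝ) / N) ((j + 1) / N) := by
    intro t ht
    rw [mem_iUnion]
    refine ⟨⌊(N : ℝ) * t⌋₊, ?_, ?_⟩
    · rw [div_le_iff₀' hN']
      exact Nat.floor_le (mul_nonneg hN'.le (le_of_lt ht))
    · rw [lt_div_iff₀' hN']
      exact Nat.lt_floor_add_one _
  calc _ ≤ ∫⁻ t in ⋃ j : ℕ, Ico ((j : ℝ) / N) ((j + 1) / N),
          ‖(N : ℝ) * stableWeight α L ⌊(N : ℝ) * t⌋₊‖ₑ := lintegral_mono_set hsub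
    _ ≤ ∑' j : ℕ, ∫⁻ t in Ico ((j : ℝ) / N) ((j + 1) / N),
          ‖(N : ℝ) * stableWeight α L ⌊(N : ℝ) * t⌋₊‖ₑ := lintegral_iUnion_le _ _
    _ = ∑' j : ℕ, ENNReal.ofReal (stableWeight α L j) := by
        refine tsum_congr fun j => ?_
        rw [setLIntegral_congr_fun (g := fun _ => ‖(N : ℝ) * stableWeight α L j‖ₑ)
          measurableSet_Ico fun t ht => ?_]
        · rw [setLIntegral_const, Real.volume_Ico,
            Real.enorm_of_nonneg (mul_nonneg hN'.le (stableWeight_nonneg h0 h1 hL j)),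
            ← ENNReal.ofReal_mul (mul_nonneg hN'.le (stableWeight_nonneg h0 h1 hL j))]
          congr 1
          field_simp
          ring
        · have : ⌊(N : ℝ) * t⌋₊ = j := by
            rw [Nat.floor_eq_iff (mul_nonneg hN'.le (le_trans (by positivity) ht.1))]
            exact ⟨(div_le_iff₀' hN').mp ht.1, (lt_div_iff₀' hN').mp ht.2⟩
          simp only [this]
    _ ≤ 1 := by
        refine ENNReal.tsum_le_of_sum_range_le fun n => ?_
        rw [← ENNReal.ofReal_sum_of_nonneg fun j _ => stableWeight_nonneg h0 h1 hL j]
        exact ENNReal.ofReal_le_one.mpr (sum_stableWeight_le_one h0 h1 hL n)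

/-- The one-sided stable density `t⁻¹ W(-l t^{-α}; -α, 0)` has `L¹` norm at most one. -/
lemma lintegral_stableDensity_le_one {α : ℝ} (h0 : 0 < α) (h1 : α < 1) {l : ℝ} (hl : 0 ≤ l) :
    ∫⁻ t in Ioi (0 : ℝ), ‖t⁻¹ * wrightW α 0 (-l * t ^ (-α))‖ₑ ≤ 1 := by
  set F : ℕ → ℝ → ENNReal := fun N t =>
    ‖(N : ℝ) * stableWeight α (l * (N : ℝ) ^ α) ⌊(N : ℝ) * t⌋₊‖ₑ with hF
  have hmeas : ∀ N, Measurable (F N) := by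
    intro N
    have h : Measurable fun j : ℕ => ‖(N : ℝ) * stableWeight α (l * (N : ℝ) ^ α) j‖ₑ :=
      measurable_of_countable _
    exact h.comp (Nat.measurable_floor.comp (measurable_const_mul (N : ℝ)))
  calc _ = ∫⁻ t in Ioi (0 : ℝ), liminf (fun N => F N t) atTop := by
        refine setLIntegral_congr_fun measurableSet_Ioi fun t ht => ?_
        exact ((tendsto_natCast_mul_stableWeight h0 h1 hl ht).enorm.liminf_eq).symm
    _ ≤ liminf (fun N => ∫⁻ t in Ioi (0 : ℝ), F N t) atTop := lintegral_liminf_le hmeas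
    _ ≤ 1 := by
        refine liminf_le_of_frequently_le' (Eventually.frequently ?_)
        filter_upwards [eventually_gt_atTop 0] with N hN
        exact lintegral_natCast_mul_stableWeight_le_one h0.le h1.le (by positivity) N hN

lemma lintegral_enorm_laplaceConv_le {f g : ℝ → ℝ} (hf : Measurable f) (hg : Measurable g) :
    ∫⁻ t in Ioi (0 : ℝ), ‖laplaceConv f g t‖ₑ ≤
      (∫⁻ t in Ioi (0 : ℝ), ‖f t‖ₑ) * ∫⁻ t in Ioi (0 : ℝ), ‖g t‖ₑ := by
  set f' : ℝ → ENNReal := (Ioi (0 : ℝ)).indicator fun t => ‖f t‖ₑ with hf'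
  set g' : ℝ → ENNReal := (Ici (0 : ℝ)).indicator fun t => ‖g t‖ₑ with hg'
  have mf : Measurable f' := hf.enorm.indicator measurableSet_Ioi
  have mg : Measurable g' := hg.enorm.indicator measurableSet_Ici
  have hpt : ∀ t ∈ Ioi (0 : ℝ), ‖laplaceConv f g t‖ₑ ≤ ∫⁻ τ, f' τ * g' (t - τ) := by
    intro t ht
    rw [laplaceConv, intervalIntegral.integral_of_le (le_of_lt ht)]
    refine (enorm_integral_le_lintegral_enorm _).trans ?_
    rw [← lintegral_indicator measurableSet_Ioc]
    refine lintegral_mono (indicator_le (g := fun τ => f' τ * g' (t - τ)) fun τ hτ => ?_)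
    rw [hf', hg', indicator_of_mem (show τ ∈ Ioi (0 : ℝ) from hτ.1),
      indicator_of_mem (show t - τ ∈ Ici (0 : ℝ) from sub_nonneg.mpr hτ.2), enorm_mul]
  calc _ ≤ ∫⁻ t in Ioi (0 : ℝ), ∫⁻ τ, f' τ * g' (t - τ) := setLIntegral_mono' measurableSet_Ioi hpt
    _ ≤ ∫⁻ t, ∫⁻ τ, f' τ * g' (t - τ) := setLIntegral_le_lintegral _ _
    _ = ∫⁻ τ, ∫⁻ t, f' τ * g' (t - τ) := by
        refine lintegral_lintegral_swap (Measurable.aemeasurable ?_)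
        exact (mf.comp measurable_snd).mul (mg.comp (measurable_fst.sub measurable_snd))
    _ = ∫⁻ τ, f' τ * ∫⁻ t, g' t := by
        refine lintegral_congr fun τ => ?_
        rw [lintegral_const_mul (f := fun t => g' (t - τ)) _ (mg.comp (measurable_id.sub_const τ)),
          lintegral_sub_right_eq_self g' τ]
    _ = (∫⁻ τ, f' τ) * ∫⁻ t, g' t := lintegral_mul_const _ mf
    _ = _ := by
        rw [hf', hg', lintegral_indicator measurableSet_Ioi, lintegral_indicator measurableSet_Ici,
          setLIntegral_congr Ioi_ae_eq_Ici.symm]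

lemma measurable_laplaceConv {F G : ℝ → ℝ → ℝ} (hF : Measurable (Function.uncurry F))
    (hG : Measurable (Function.uncurry G)) :
    Measurable (Function.uncurry fun p t => laplaceConv (F p) (G p) t) := by
  have hint : ∀ s : Set ((ℝ × ℝ) × ℝ), MeasurableSet s →
      Measurable fun q : ℝ × ℝ => ∫ τ in {τ | (q, τ) ∈ s}, F q.1 τ * G q.1 (q.2 - τ) := by
    intro s hs
    have hm : Measurable fun x : (ℝ × ℝ) × ℝ => F x.1.1 x.2 * G x.1.1 (x.1.2 - x.2) :=
      (hF.comp (by fun_prop : Measurable fun x : (ℝ × ℝ) × ℝ => (x.1.1, x.2))).mul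
        (hG.comp (by fun_prop : Measurable fun x : (ℝ × ℝ) × ℝ => (x.1.1, x.1.2 - x.2)))
    have h := ((hm.indicator hs).stronglyMeasurable.integral_prod_right'
      (ν := (volume : Measure ℝ))).measurable
    convert h using 2 with q
    exact (MeasureTheory.integral_indicator (measurable_prodMk_left hs)).symm
  exact (hint {x | x.2 ∈ Ioc 0 x.1.2} (by measurability)).sub
    (hint {x | x.2 ∈ Ioc x.1.2 0} (by measurability))

lemma measurable_iterConv {n : ℕ} {h : Fin (n + 1) → ℝ → ℝ → ℝ}
    (hm : ∀ j, Measurable (Function.uncurry (h j))) :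
    Measurable (Function.uncurry fun p t => iterConv n (fun j => h j p) t) := by
  induction n with
  | zero => exact hm 0
  | succ n ih => exact measurable_laplaceConv (ih fun j => hm j.castSucc) (hm (Fin.last (n + 1)))

lemma measurable_iterConv_apply {n : ℕ} {h : Fin (n + 1) → ℝ → ℝ} (hm : ∀ j, Measurable (h j)) :
    Measurable (iterConv n h) :=
  (measurable_iterConv (h := fun j _ => h j) fun j => (hm j).comp measurable_snd).comp
    (measurable_prodMk_left (x := (0 : ℝ)))

lemma lintegral_enorm_iterConv_le_one {n : ℕ} {h : Fin (n + 1) → ℝ → ℝ} (hm : ∀ j, Measurable (h j))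
    (hle : ∀ j, ∫⁻ t in Ioi (0 : ℝ), ‖h j t‖ₑ ≤ 1) :
    ∫⁻ t in Ioi (0 : ℝ), ‖iterConv n h t‖ₑ ≤ 1 := by
  induction n with
  | zero => exact hle 0
  | succ n ih =>
    refine (lintegral_enorm_laplaceConv_le (measurable_iterConv_apply fun j => hm j.castSucc)
      (hm _)).trans ?_
    exact mul_le_one' (ih (fun j => hm j.castSucc) fun j => hle j.castSucc) (hle _)

lemma measurable_Sconv_zero {n : ℕ} {α : Fin (n + 1) → ℝ} (lam : Fin (n + 1) → ℝ)
    (hpos : ∀ j, 0 < α j) (hlt1 : ∀ j, α j < 1) :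
    Measurable (Function.uncurry fun p t => Sconv n 0 α (fun j => lam j * p) t) := by
  refine measurable_iterConv (h := fun j p t => t ^ ((if j = 0 then (0 : ℝ) else 0) - 1) *
    wrightW (α j) (if j = 0 then 0 else 0) (-(lam j * p) * t ^ (-(α j)))) fun j => ?_
  simp only [ite_self]
  refine Measurable.mul (by fun_prop) ((measurable_wrightW_zero (hpos j) (hlt1 j)).comp ?_)
  fun_prop

lemma lintegral_enorm_Sconv_zero_le_one {n : ℕ} {α l : Fin (n + 1) → ℝ}
    (hpos : ∀ j, 0 < α j) (hlt1 : ∀ j, α j < 1) (hl : ∀ j, 0 ≤ l j) :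
    ∫⁻ t in Ioi (0 : ℝ), ‖Sconv n 0 α l t‖ₑ ≤ 1 := by
  refine lintegral_enorm_iterConv_le_one (fun j => ?_) fun j => ?_
  · simp only [ite_self]
    refine Measurable.mul (by fun_prop) ((measurable_wrightW_zero (hpos j) (hlt1 j)).comp ?_)
    fun_prop
  · simp only [ite_self, zero_sub, Real.rpow_neg_one]
    exact lintegral_stableDensity_le_one (hpos j) (hlt1 j) (hl j)

lemma lintegral_rpow_mul_exp_neg_div {c : ℝ} (hc : 0 < c) :
    ∫⁻ p in Ioi (0 : ℝ), ENNReal.ofReal (p ^ (-(3 / 2) : ℝ) * Real.exp (-c / p)) =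
      ENNReal.ofReal √(π / c) := by
  have hcongr : ∀ p ∈ Ioi (0 : ℝ), (|(-(1 / 2) : ℝ)| * p ^ ((-(1 / 2) : ℝ) - 1)) •
      (2 * Real.exp (-c * (p ^ (-(1 / 2) : ℝ)) ^ 2)) =
      p ^ (-(3 / 2) : ℝ) * Real.exp (-c / p) := by
    intro p hp
    have hp' : (0 : ℝ) < p := hp
    rw [← Real.rpow_natCast, ← Real.rpow_mul hp'.le, abs_neg, abs_of_pos (by norm_num)]
    norm_num [Real.rpow_neg_one, smul_eq_mul]
    rw [← div_eq_mul_inv, neg_div]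
    ring
  have hint : IntegrableOn (fun p : ℝ => p ^ (-(3 / 2) : ℝ) * Real.exp (-c / p)) (Ioi 0) := by
    refine IntegrableOn.congr_fun ?_ hcongr measurableSet_Ioi
    refine (integrableOn_Ioi_comp_rpow_iff (fun u : ℝ => 2 * Real.exp (-c * u ^ 2))
      (by norm_num)).mpr ?_
    exact ((integrable_exp_neg_mul_sq hc).const_mul 2).integrableOn
  rw [← ofReal_integral_eq_lintegral_ofReal hint]
  · congr 1
    rw [← setIntegral_congr_fun measurableSet_Ioi hcongr,
      integral_comp_rpow_Ioi (fun u : ℝ => 2 * Real.exp (-c * u ^ 2)) (by norm_num),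
      MeasureTheory.integral_const_mul, integral_gaussian_Ioi]
    ring
  · filter_upwards [ae_restrict_mem measurableSet_Ioi] with p hp
    have hp' : (0 : ℝ) < p := hp
    exact mul_nonneg (by positivity) (Real.exp_pos _).le

lemma lintegral_lintegral_mul_enorm_le {S : ℝ → ℝ → ℝ} (hS : Measurable (Function.uncurry S))
    (hle : ∀ p, 0 < p → ∫⁻ s in Ioi (0 : ℝ), ‖S p s‖ₑ ≤ 1) {w : ℝ → ENNReal} (hw : Measurable w) :
    ∫⁻ s in Ioi (0 : ℝ), ∫⁻ p in Ioi (0 : ℝ), w p * ‖S p s‖ₑ ≤ ∫⁻ p in Ioi (0 : ℝ), w p := by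
  rw [lintegral_lintegral_swap]
  · refine setLIntegral_mono' measurableSet_Ioi fun p hp => ?_
    rw [lintegral_const_mul (f := fun s => ‖S p s‖ₑ) _ (hS.comp measurable_prodMk_left).enorm]
    exact mul_le_of_le_one_right zero_le (hle p hp)
  · exact ((hw.comp measurable_snd).mul (hS.comp measurable_swap).enorm).aemeasurable

lemma hasDerivAt_heat_integrand (z p c : ℝ) :
    HasDerivAt (fun z => p ^ (-(1 / 2) : ℝ) * Real.exp (-(|z| ^ 2) / (4 * p)) * c)
      (p ^ (-(1 / 2) : ℝ) * (Real.exp (-(z ^ 2) / (4 * p)) * (-(2 * z) / (4 * p))) * c) z := by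
  simp only [sq_abs]
  have h : HasDerivAt (fun z : ℝ => -(z ^ 2) / (4 * p)) (-(2 * z) / (4 * p)) z := by
    simpa using ((hasDerivAt_pow 2 z).neg.div_const (4 * p))
  exact ((h.exp.const_mul _).mul_const c)

lemma abs_heat_integrand_deriv {p : ℝ} (hp : 0 < p) (z c : ℝ) :
    |p ^ (-(1 / 2) : ℝ) * (Real.exp (-(z ^ 2) / (4 * p)) * (-(2 * z) / (4 * p))) * c| =
      |z| / 2 * (p ^ (-(3 / 2) : ℝ) * Real.exp (-(z ^ 2 / 4) / p)) * |c| := by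
  have h1 : p ^ (-(1 / 2) : ℝ) = p ^ (-(3 / 2) : ℝ) * p := by
    rw [← Real.rpow_add_one hp.ne']; norm_num
  have h2 : -(z ^ 2) / (4 * p) = -(z ^ 2 / 4) / p := by field_simp
  have h3 : |p ^ (-(1 / 2) : ℝ)| = p ^ (-(1 / 2) : ℝ) := abs_of_pos (by positivity)
  rw [abs_mul, abs_mul, abs_mul, Real.abs_exp, h2, h3, h1, abs_div, abs_neg, abs_mul,
    abs_of_pos (by positivity : (0 : ℝ) < 4 * p), abs_two]
  field_simp
  ring

lemma enorm_deriv_heat_integral_le {S : ℝ → ℝ} (hS : Measurable S) {y : ℝ} (hy : y ≠ 0)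
    (hfin : ∫⁻ p in Ioi (0 : ℝ), ENNReal.ofReal (p ^ (-(3 / 2) : ℝ) *
      Real.exp (-(y ^ 2 / 16) / p)) * ‖S p‖ₑ ≠ ⊤) :
    ‖deriv (fun z => ∫ p in Ioi (0 : ℝ),
      p ^ (-(1 / 2) : ℝ) * Real.exp (-(|z| ^ 2) / (4 * p)) * S p) y‖ₑ ≤
      ∫⁻ p in Ioi (0 : ℝ), ENNReal.ofReal (|y| / 2 * (p ^ (-(3 / 2) : ℝ) *
        Real.exp (-(y ^ 2 / 4) / p))) * ‖S p‖ₑ := by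
  set φ : ℝ → ℝ → ℝ := fun z p => p ^ (-(1 / 2) : ℝ) * Real.exp (-(|z| ^ 2) / (4 * p)) * S p
    with hφ
  set B : ℝ → ℝ := fun p => p ^ (-(3 / 2) : ℝ) * Real.exp (-(y ^ 2 / 16) / p) * |S p| with hB
  have hφm : ∀ z, Measurable (φ z) := fun z => by fun_prop
  have hBm : Measurable B := by fun_prop
  have hB0 : ∀ p, 0 < p → 0 ≤ B p := fun p hp => by positivity
  have hBint : IntegrableOn B (Ioi 0) := by
    refine ⟨hBm.aestronglyMeasurable, lt_of_le_of_lt (le_of_eq ?_) hfin.lt_top⟩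
    refine setLIntegral_congr_fun measurableSet_Ioi fun p hp => ?_
    have hp' : (0 : ℝ) < p := hp
    simp only [hB]
    rw [enorm_mul, Real.enorm_of_nonneg (by positivity), Real.enorm_abs]
  by_cases hyint : IntegrableOn (φ y) (Ioi 0)
  · have hd := (hasDerivAt_integral_of_dominated_loc_of_deriv_le
      (μ := volume.restrict (Ioi (0 : ℝ))) (F := φ)
      (F' := fun z p => p ^ (-(1 / 2) : ℝ) *
        (Real.exp (-(z ^ 2) / (4 * p)) * (-(2 * z) / (4 * p))) * S p)
      (bound := fun p => |y| * B p) (x₀ := y)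
      (Metric.ball_mem_nhds y (by positivity : 0 < |y| / 2))
      (Eventually.of_forall fun z => (hφm z).aestronglyMeasurable) hyint
      (by fun_prop : Measurable _).aestronglyMeasurable ?_ (hBint.const_mul _) ?_).2
    · rw [hd.deriv]
      refine (enorm_integral_le_lintegral_enorm _).trans (le_of_eq ?_)
      refine setLIntegral_congr_fun measurableSet_Ioi fun p hp => ?_
      have hp' : (0 : ℝ) < p := hp
      rw [← Real.enorm_abs, abs_heat_integrand_deriv hp', enorm_mul,
        Real.enorm_of_nonneg (by positivity), Real.enorm_abs]
    · filter_upwards [ae_restrict_mem measurableSet_Ioi] with p hp z hz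
      have hp' : (0 : ℝ) < p := hp
      rw [Real.norm_eq_abs, abs_heat_integrand_deriv hp', hB]
      rw [Metric.mem_ball, Real.dist_eq] at hz
      have h1 : |z| ≤ 2 * |y| := by
        have := abs_sub_abs_le_abs_sub z y
        linarith [abs_nonneg y]
      have h2 : |y| / 2 ≤ |z| := by
        have := abs_sub_abs_le_abs_sub y z
        rw [abs_sub_comm] at this
        linarith
      have h3 : y ^ 2 / 16 ≤ z ^ 2 / 4 := by
        rw [← sq_abs y, ← sq_abs z]
        nlinarith [abs_nonneg y]
      have h4 : Real.exp (-(z ^ 2 / 4) / p) ≤ Real.exp (-(y ^ 2 / 16) / p) := by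
        gcongr
      calc |z| / 2 * (p ^ (-(3 / 2) : ℝ) * Real.exp (-(z ^ 2 / 4) / p)) * |S p|
          ≤ |y| * (p ^ (-(3 / 2) : ℝ) * Real.exp (-(y ^ 2 / 16) / p)) * |S p| := by
            gcongr
            linarith
        _ = _ := by ring
    · exact Eventually.of_forall fun p z _ => hasDerivAt_heat_integrand z p (S p)
  · have hnone : ∀ z, ¬ IntegrableOn (φ z) (Ioi 0) := by
      intro z hz
      refine hyint (Integrable.mono' (hBint.add (hz.norm.const_mul (Real.exp (z ^ 2 / 4))))
        (hφm y).aestronglyMeasurable ?_)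
      filter_upwards [ae_restrict_mem measurableSet_Ioi] with p hp
      have hp' : (0 : ℝ) < p := hp
      have hnorm : ∀ u, ‖φ u p‖ = p ^ (-(1 / 2) : ℝ) * Real.exp (-(u ^ 2 / 4) / p) * |S p| := by
        intro u
        simp only [hφ]
        rw [norm_mul, Real.norm_of_nonneg (by positivity), Real.norm_eq_abs, sq_abs,
          show -(u ^ 2) / (4 * p) = -(u ^ 2 / 4) / p by field_simp]
      simp only [Pi.add_apply, hnorm]
      rcases le_total p 1 with h1 | h1
      · refine le_add_of_le_of_nonneg ?_ (by positivity)
        have h2 : p ^ (-(1 / 2) : ℝ) ≤ p ^ (-(3 / 2) : ℝ) :=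
          Real.rpow_le_rpow_of_exponent_ge hp' h1 (by norm_num)
        have h3 : Real.exp (-(y ^ 2 / 4) / p) ≤ Real.exp (-(y ^ 2 / 16) / p) := by
          gcongr
          norm_num
        simp only [hB]
        gcongr
      · refine le_add_of_nonneg_of_le (hB0 p hp') ?_
        have h2 : Real.exp (-(y ^ 2 / 4) / p) ≤ 1 := by
          rw [Real.exp_le_one_iff, neg_div]
          exact neg_nonpos.mpr (by positivity)
        have h3 : 1 ≤ Real.exp (z ^ 2 / 4) * Real.exp (-(z ^ 2 / 4) / p) := by
          rw [← Real.exp_add, Real.one_le_exp_iff, neg_div, ← sub_eq_add_neg, sub_nonneg]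
          exact div_le_self (by positivity) h1
        calc p ^ (-(1 / 2) : ℝ) * Real.exp (-(y ^ 2 / 4) / p) * |S p|
            ≤ p ^ (-(1 / 2) : ℝ) * (Real.exp (z ^ 2 / 4) * Real.exp (-(z ^ 2 / 4) / p)) * |S p| := by
              gcongr
              exact h2.trans h3
          _ = _ := by ring
    have hzero : (fun z => ∫ p in Ioi (0 : ℝ), φ z p) = fun _ => 0 :=
      funext fun z => integral_undef (hnone z)
    change ‖deriv (fun z => ∫ p in Ioi (0 : ℝ), φ z p) y‖ₑ ≤ _
    rw [hzero]
    simp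

lemma lintegral_enorm_kerEx_le (m : ℕ) (α lam : Fin (m + 1) → ℝ)
    (hpos : ∀ j, 0 < α j) (hlt1 : ∀ j, α j < 1) (hlam : ∀ j, 0 < lam j) {y : ℝ} (hy : y ≠ 0) :
    ∫⁻ s in Ioi (0 : ℝ), ‖kerEx m α lam y s‖ₑ ≤ ENNReal.ofReal (1 / 2) := by
  set S : ℝ → ℝ → ℝ := fun p t => Sconv m 0 α (fun j => lam j * p) t with hSdef
  have hS : Measurable (Function.uncurry S) := measurable_Sconv_zero lam hpos hlt1
  have hle : ∀ p, 0 < p → ∫⁻ s in Ioi (0 : ℝ), ‖S p s‖ₑ ≤ 1 := fun p hp =>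
    lintegral_enorm_Sconv_zero_le_one hpos hlt1 fun j => (mul_pos (hlam j) hp).le
  set c : ℝ := (4 * π) ^ (-(1 / 2) : ℝ) with hc
  have hc0 : 0 ≤ c := by positivity
  have hy2 : 0 < y ^ 2 := by positivity
  have hfin : ∀ᵐ s ∂volume.restrict (Ioi (0 : ℝ)),
      ∫⁻ p in Ioi (0 : ℝ), ENNReal.ofReal (p ^ (-(3 / 2) : ℝ) *
        Real.exp (-(y ^ 2 / 16) / p)) * ‖S p s‖ₑ < ⊤ := by
    have hw : Measurable fun p : ℝ => ENNReal.ofReal (p ^ (-(3 / 2) : ℝ) *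
        Real.exp (-(y ^ 2 / 16) / p)) := by fun_prop
    refine ae_lt_top ?_ (ne_top_of_le_ne_top ?_ (lintegral_lintegral_mul_enorm_le hS hle hw))
    · exact Measurable.lintegral_prod_right'
        (f := fun q : ℝ × ℝ => ENNReal.ofReal (q.2 ^ (-(3 / 2) : ℝ) *
          Real.exp (-(y ^ 2 / 16) / q.2)) * ‖S q.2 q.1‖ₑ)
        ((hw.comp measurable_snd).mul (hS.comp measurable_swap).enorm)
    · rw [lintegral_rpow_mul_exp_neg_div (by positivity)]
      exact ENNReal.ofReal_ne_top
  have hw : Measurable fun p : ℝ => ENNReal.ofReal (|y| / 2 * (p ^ (-(3 / 2) : ℝ) *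
      Real.exp (-(y ^ 2 / 4) / p))) := by fun_prop
  calc ∫⁻ s in Ioi (0 : ℝ), ‖kerEx m α lam y s‖ₑ
      ≤ ∫⁻ s in Ioi (0 : ℝ), ENNReal.ofReal c * ∫⁻ p in Ioi (0 : ℝ),
          ENNReal.ofReal (|y| / 2 * (p ^ (-(3 / 2) : ℝ) *
            Real.exp (-(y ^ 2 / 4) / p))) * ‖S p s‖ₑ := by
        refine lintegral_mono_ae ?_
        filter_upwards [hfin] with s hs
        have hk : kerEx m α lam y s = c * deriv (fun z => ∫ p in Ioi (0 : ℝ),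
            p ^ (-(1 / 2) : ℝ) * Real.exp (-(|z| ^ 2) / (4 * p)) * S p s) y :=
          deriv_const_mul_field c
        rw [hk, enorm_mul, Real.enorm_of_nonneg hc0]
        gcongr
        exact enorm_deriv_heat_integral_le (hS.comp measurable_prodMk_right) hy hs.ne
    _ = ENNReal.ofReal c * ∫⁻ s in Ioi (0 : ℝ), ∫⁻ p in Ioi (0 : ℝ),
          ENNReal.ofReal (|y| / 2 * (p ^ (-(3 / 2) : ℝ) *
            Real.exp (-(y ^ 2 / 4) / p))) * ‖S p s‖ₑ := by
        rw [lintegral_const_mul' _ _ ENNReal.ofReal_ne_top]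
    _ ≤ ENNReal.ofReal c * ∫⁻ p in Ioi (0 : ℝ), ENNReal.ofReal (|y| / 2 * (p ^ (-(3 / 2) : ℝ) *
            Real.exp (-(y ^ 2 / 4) / p))) := by
        exact mul_le_mul' le_rfl (lintegral_lintegral_mul_enorm_le hS hle hw)
    _ = ENNReal.ofReal c * (ENNReal.ofReal (|y| / 2) * ENNReal.ofReal √(π / (y ^ 2 / 4))) := by
        simp only [ENNReal.ofReal_mul (by positivity : (0 : ℝ) ≤ |y| / 2)]
        rw [lintegral_const_mul' _ _ ENNReal.ofReal_ne_top,
          lintegral_rpow_mul_exp_neg_div (by positivity)]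
    _ = ENNReal.ofReal (1 / 2) := by
        rw [← ENNReal.ofReal_mul (by positivity), ← ENNReal.ofReal_mul hc0]
        congr 1
        have h1 : √(π / (y ^ 2 / 4)) = 2 * √π / |y| := by
          rw [show π / (y ^ 2 / 4) = (2 / y) ^ 2 * π by field_simp; norm_num,
            Real.sqrt_mul (sq_nonneg _), Real.sqrt_sq_eq_abs, abs_div, abs_two]
          ring
        have h2 : c = (2 * √π)⁻¹ := by
          rw [hc, Real.rpow_neg (by positivity), ← Real.sqrt_eq_rpow,
            Real.sqrt_mul (by norm_num), show (4 : ℝ) = 2 ^ 2 by norm_num,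
            Real.sqrt_sq (by norm_num)]
        have h3 : √π ≠ 0 := (Real.sqrt_pos.mpr Real.pi_pos).ne'
        rw [h1, h2]
        field_simp

/-- Uniform `L¹` bound for the truncated single-layer integral of `E_x`:
`∫_{t-δ}^t |E_x(x-a, t-τ)| dτ ≤ 1/2`. -/
theorem truncated_layer_L1_bound
    (m : ℕ) (α lam : Fin (m + 1) → ℝ)
    (hmono : StrictMono α) (hpos : ∀ j, 0 < α j) (hlt1 : ∀ j, α j < 1)
    (hlam : ∀ j, 0 < lam j)
    (a t δ : ℝ) (ht : 0 < t) (hδ : δ ∈ Set.Ioo 0 t)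
    (x : ℝ) (hx : x ≠ a) :
    ∫ τ in (t - δ)..t, |kerEx m α lam (x - a) (t - τ)| ≤ 1/2 := by
  rw [intervalIntegral.integral_comp_sub_left (fun s => |kerEx m α lam (x - a) s|) t, sub_self,
    sub_sub_cancel, intervalIntegral.integral_of_le hδ.1.le]
  refine (le_abs_self _).trans ?_
  rw [← ENNReal.ofReal_le_ofReal_iff (by norm_num), ← Real.enorm_eq_ofReal_abs]
  calc _ ≤ ∫⁻ s in Ioc 0 δ, ‖|kerEx m α lam (x - a) s|‖ₑ := enorm_integral_le_lintegral_enorm _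
    _ = ∫⁻ s in Ioc 0 δ, ‖kerEx m α lam (x - a) s‖ₑ := by simp only [Real.enorm_abs]
    _ ≤ ∫⁻ s in Ioi 0, ‖kerEx m α lam (x - a) s‖ₑ := lintegral_mono_set Ioc_subset_Ioi_self
    _ ≤ _ := lintegral_enorm_kerEx_le m α lam hpos hlt1 hlam (sub_ne_zero.mpr hx)
end

section
/- Integral representation of the spatial derivative of E: For every x ∈ ℝ with x ≠ 0 and every t > 0, the kernel E is differentiable in x at (x,t) and E_x(x,t) = −(x/2) (4π)^{−1/2} ∫₀^∞ p^{−3/2} exp(−x²/(4p)) S⁰_m(t;−λ₁p,…,−λ_m p;−α₁,…,−α_m) dp. -/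
open MeasureTheory Real Filter Set Topology intervalIntegral

lemma hasDerivAt_integral_rpow_mul_cexp {s : ℝ} (hs : 0 < s) {r : ℂ} (hr : 0 < r.re) :
    HasDerivAt (fun z : ℂ => ∫ u in Ioi (0:ℝ), ((u ^ (s - 1) : ℝ) : ℂ) * Complex.exp (-z * u))
      (∫ u in Ioi (0:ℝ), ((u ^ (s - 1) : ℝ) : ℂ) * (Complex.exp (-r * u) * (-u))) r := by
  have hmeas (z : ℂ) : Measurable
      fun u : ℝ => ((u ^ (s - 1) : ℝ) : ℂ) * Complex.exp (-z * u) := by fun_prop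
  have hint {q c : ℝ} (hq : -1 < q) (hc : 0 < c) :
      IntegrableOn (fun u : ℝ => u ^ q * Real.exp (-c * u)) (Ioi 0) := by
    simpa using integrableOn_rpow_mul_exp_neg_mul_rpow hq one_pos hc
  refine (_root_.hasDerivAt_integral_of_dominated_loc_of_deriv_le
    (F := fun (z : ℂ) (u : ℝ) => ((u ^ (s - 1) : ℝ) : ℂ) * Complex.exp (-z * u))
    (F' := fun z u => ((u ^ (s - 1) : ℝ) : ℂ) * (Complex.exp (-z * u) * (-u)))
    (s := {z : ℂ | r.re / 2 < z.re})
    (bound := fun u => u ^ s * Real.exp (-(r.re / 2) * u))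
    ?_ ?_ ?_ ?_ ?_ ?_ ?_).2
  · exact (isOpen_lt continuous_const Complex.continuous_re).mem_nhds (by
      change r.re / 2 < r.re; linarith)
  · exact Eventually.of_forall fun z => (hmeas z).aestronglyMeasurable
  · refine (hint (by linarith : -1 < s - 1) hr).mono' (hmeas r).aestronglyMeasurable ?_
    filter_upwards [ae_restrict_mem measurableSet_Ioi] with u hu
    rw [norm_mul, Complex.norm_exp, Complex.norm_real,
      Real.norm_of_nonneg (rpow_nonneg (le_of_lt hu) _)]
    simp
  · have : Measurable fun u : ℝ => ((u ^ (s - 1) : ℝ) : ℂ) * (Complex.exp (-r * u) * (-u)) := by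
      fun_prop
    exact this.aestronglyMeasurable
  · filter_upwards [ae_restrict_mem measurableSet_Ioi] with u hu z hz
    have hu' : 0 < u := hu
    have hz' : r.re / 2 < z.re := hz
    rw [norm_mul, norm_mul, Complex.norm_exp, Complex.norm_real, norm_neg, Complex.norm_real,
      Real.norm_of_nonneg (rpow_nonneg hu'.le _), Real.norm_of_nonneg hu'.le]
    have e : (-z * (u : ℂ)).re = -z.re * u := by simp
    have : u ^ (s - 1) * u = u ^ s := by
      rw [← rpow_add_one hu'.ne']; simp
    rw [e, mul_comm (Real.exp _), ← mul_assoc, this]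
    gcongr
  · exact hint (by linarith) (by linarith)
  · refine Eventually.of_forall fun u z _ => ?_
    have : HasDerivAt (fun z : ℂ => -z * (u : ℂ)) (-u) z := by
      simpa using (hasDerivAt_id z).neg.mul_const (u : ℂ)
    exact (this.cexp).const_mul _

lemma integral_rpow_mul_cexp_neg_mul_Ioi {s : ℝ} (hs : 0 < s) {r : ℂ} (hr : 0 < r.re) :
    ∫ u in Ioi (0:ℝ), ((u ^ (s - 1) : ℝ) : ℂ) * Complex.exp (-r * u) =
      r ^ (-s : ℂ) * Real.Gamma s := by
  have hopen : IsOpen {z : ℂ | 0 < z.re} := isOpen_lt continuous_const Complex.continuous_re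
  have hconv : Convex ℝ {z : ℂ | 0 < z.re} := convex_halfSpace_re_gt 0
  have hf : AnalyticOnNhd ℂ (fun z : ℂ => ∫ u in Ioi (0:ℝ),
      ((u ^ (s - 1) : ℝ) : ℂ) * Complex.exp (-z * u)) {z : ℂ | 0 < z.re} :=
    DifferentiableOn.analyticOnNhd (fun z hz =>
      (hasDerivAt_integral_rpow_mul_cexp hs hz).differentiableAt.differentiableWithinAt) hopen
  have hg : AnalyticOnNhd ℂ (fun z : ℂ => z ^ (-s : ℂ) * Real.Gamma s) {z : ℂ | 0 < z.re} :=
    DifferentiableOn.analyticOnNhd (fun z hz =>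
      ((differentiableAt_id.cpow_const (Or.inl hz)).mul_const _).differentiableWithinAt) hopen
  have hreal : ∀ c : ℝ, 0 < c → ∫ u in Ioi (0:ℝ),
      ((u ^ (s - 1) : ℝ) : ℂ) * Complex.exp (-(c : ℂ) * u) = (c : ℂ) ^ (-s : ℂ) * Real.Gamma s := by
    intro c hc
    have h := Real.integral_rpow_mul_exp_neg_mul_Ioi hs hc
    rw [one_div, inv_rpow hc.le, ← rpow_neg hc.le] at h
    rw [← Complex.ofReal_neg s, ← Complex.ofReal_cpow hc.le, ← Complex.ofReal_mul, ← h,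
      ← integral_complex_ofReal]
    congr 1 with u
    push_cast
    ring_nf
  refine hf.eqOn_of_preconnected_of_frequently_eq hg hconv.isPreconnected
    (z₀ := 1) (by simp) ?_ hr
  have ht : Tendsto (fun c : ℝ => (c : ℂ)) (𝓝[>] 1) (𝓝[≠] 1) := by
    refine tendsto_nhdsWithin_iff.2 ⟨?_, ?_⟩
    · exact (Complex.continuous_ofReal.tendsto' 1 1 (by simp)).mono_left nhdsWithin_le_nhds
    · filter_upwards [self_mem_nhdsWithin] with c hc
      have : (1:ℝ) < c := hc
      simpa using this.ne'
  refine ht.frequently (Eventually.frequently ?_)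
  filter_upwards [self_mem_nhdsWithin] with c hc
  have : (1:ℝ) < c := hc
  exact hreal c (by linarith)

lemma inv_Gamma_zero_sub {y : ℝ} (hy : 0 ≤ y) :
    (Real.Gamma (0 - y))⁻¹ = -(Real.Gamma (1 + y) * Real.sin (π * y)) / π := by
  have h := Real.Gamma_mul_Gamma_one_sub (1 + y)
  rw [show 1 - (1 + y) = 0 - y by ring, mul_add, mul_one, add_comm π, Real.sin_add_pi] at h
  have h0 : 0 < Real.Gamma (1 + y) := Real.Gamma_pos_of_pos (by linarith)
  rw [show Real.Gamma (0 - y) = π / -Real.sin (π * y) / Real.Gamma (1 + y) by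
    rw [← h]; field_simp]
  rw [inv_div, div_div_eq_mul_div]
  ring

lemma integrableOn_exp_neg_mul_mul_exp_mul_rpow {α c z : ℝ} (hα : 0 < α) (hα1 : α < 1)
    (hc : 0 < c) :
    IntegrableOn (fun u : ℝ => Real.exp (-c * u) * Real.exp (z * u ^ α)) (Ioi 0) := by
  refine integrable_of_isBigO_exp_neg (b := c / 2) (by positivity) ?_ ?_
  · have : Continuous fun u : ℝ => u ^ α := continuous_rpow_const hα.le
    fun_prop
  · have h : Tendsto (fun u : ℝ => z * u ^ (-(1 - α))) atTop (𝓝 (z * 0)) :=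
      (tendsto_rpow_neg_atTop (by linarith)).const_mul z
    rw [mul_zero] at h
    refine Asymptotics.IsBigO.of_bound 1 ?_
    filter_upwards [h.eventually_lt_const (show 0 < c / 2 by positivity), eventually_gt_atTop 0]
      with u hu hu0
    rw [← Real.exp_add, one_mul, Real.norm_of_nonneg (Real.exp_pos _).le,
      Real.norm_of_nonneg (Real.exp_pos _).le]
    have e : u ^ α = u ^ (-(1 - α)) * u := by
      rw [← rpow_add_one hu0.ne']; ring_nf
    have := mul_lt_mul_of_pos_right hu hu0
    gcongr
    rw [e]
    linarith

/-- Euler's integral for `Γ(1 + αk)` along the ray of argument `θ`. -/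
lemma Gamma_mul_cexp_eq_integral {α θ : ℝ} (hα : 0 < α) (hθ : |θ| < π / 2) (k : ℕ) :
    Complex.exp (π * α * k * Complex.I) * Real.Gamma (1 + α * k) =
      ∫ u in Ioi (0:ℝ), Complex.exp (θ * Complex.I) *
        Complex.exp (-Complex.exp (θ * Complex.I) * u) *
        (((u ^ α : ℝ) : ℂ) * Complex.exp (α * (π + θ) * Complex.I)) ^ k := by
  have hθ' := abs_lt.1 hθ
  have hr : 0 < (Complex.exp (θ * Complex.I)).re := by
    rw [Complex.exp_ofReal_mul_I_re]
    exact cos_pos_of_mem_Ioo ⟨hθ'.1, hθ'.2⟩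
  have h := integral_rpow_mul_cexp_neg_mul_Ioi (s := 1 + α * k) (by positivity) hr
  have hlog : Complex.log (Complex.exp (θ * Complex.I)) = θ * Complex.I :=
    Complex.log_exp (by simp; linarith [pi_pos]) (by simp; linarith [pi_pos])
  rw [Complex.cpow_def_of_ne_zero (Complex.exp_ne_zero _), hlog] at h
  calc _ = (Complex.exp (θ * Complex.I) * Complex.exp (α * (π + θ) * Complex.I) ^ k) *
        (Complex.exp (θ * Complex.I * -(1 + α * k : ℝ)) * Real.Gamma (1 + α * k)) := by
        rw [← Complex.exp_nat_mul, ← mul_assoc, ← Complex.exp_add, ← Complex.exp_add]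
        congr 2
        push_cast
        ring
    _ = _ := by
        rw [← h, ← MeasureTheory.integral_const_mul]
        refine setIntegral_congr_fun measurableSet_Ioi fun u hu => ?_
        have hu' : (0:ℝ) < u := hu
        rw [show u ^ (1 + α * k - 1) = (u ^ α) ^ k by
          rw [← rpow_natCast, ← rpow_mul hu'.le]; ring_nf]
        push_cast
        ring

lemma hasSum_cexp (w : ℂ) : HasSum (fun k : ℕ => w ^ k / k.factorial) (Complex.exp w) := by
  rw [Complex.exp_eq_exp_ℂ]
  exact NormedSpace.expSeries_div_hasSum_exp w

lemma wrightW_neg_eq_integral {α θ z : ℝ} (hα : 0 < α) (hα1 : α < 1) (hθ : |θ| < π / 2)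
    (hz : 0 ≤ z) :
    wrightW α 0 (-z) = -(∫ u in Ioi (0:ℝ), Complex.exp (θ * Complex.I) *
        Complex.exp (-Complex.exp (θ * Complex.I) * u) *
        Complex.exp (-z * (((u ^ α : ℝ) : ℂ) * Complex.exp (α * (π + θ) * Complex.I)))).im / π := by
  have hr : 0 < Real.cos θ := cos_pos_of_mem_Ioo ⟨(abs_lt.1 hθ).1, (abs_lt.1 hθ).2⟩
  have hw : ‖Complex.exp (α * (π + θ) * Complex.I)‖ = 1 := by
    exact_mod_cast Complex.norm_exp_ofReal_mul_I (α * (π + θ))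
  have key : HasSum (fun k : ℕ => ∫ u in Ioi (0:ℝ), Complex.exp (θ * Complex.I) *
        Complex.exp (-Complex.exp (θ * Complex.I) * u) *
        ((-z * (((u ^ α : ℝ) : ℂ) * Complex.exp (α * (π + θ) * Complex.I))) ^ k / k.factorial))
      (∫ u in Ioi (0:ℝ), Complex.exp (θ * Complex.I) *
        Complex.exp (-Complex.exp (θ * Complex.I) * u) *
        Complex.exp (-z * (((u ^ α : ℝ) : ℂ) * Complex.exp (α * (π + θ) * Complex.I)))) := by
    have hsum (u : ℝ) : HasSum (fun k : ℕ => Real.exp (-Real.cos θ * u) *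
        ((z * u ^ α) ^ k / k.factorial)) (Real.exp (-Real.cos θ * u) * Real.exp (z * u ^ α)) := by
      rw [Real.exp_eq_exp_ℝ]
      exact (NormedSpace.expSeries_div_hasSum_exp (z * u ^ α)).mul_left _
    refine MeasureTheory.hasSum_integral_of_dominated_convergence
      (fun k u => Real.exp (-Real.cos θ * u) * ((z * u ^ α) ^ k / k.factorial)) ?_ ?_ ?_ ?_ ?_
    · intro k
      exact Measurable.aestronglyMeasurable (by fun_prop)
    · intro k
      filter_upwards [ae_restrict_mem measurableSet_Ioi] with u hu
      have hu' : (0:ℝ) < u := hu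
      rw [norm_mul, norm_mul, Complex.norm_exp_ofReal_mul_I, one_mul, Complex.norm_exp, norm_div,
        norm_pow, norm_mul, norm_mul, hw, norm_neg, Complex.norm_real, Complex.norm_real,
        Real.norm_of_nonneg hz, Real.norm_of_nonneg (rpow_nonneg hu'.le _)]
      simp [Complex.exp_ofReal_mul_I_re]
    · exact Eventually.of_forall fun u => (hsum u).summable
    · simp_rw [fun u => (hsum u).tsum_eq]
      exact integrableOn_exp_neg_mul_mul_exp_mul_rpow hα hα1 hr
    · refine Eventually.of_forall fun u => ?_
      exact (hasSum_cexp _).mul_left _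
  have him := ((Complex.hasSum_iff _ _).1 key).2.neg.div_const π
  rw [wrightW, ← him.tsum_eq]
  congr 1 with k
  have e : (∫ u in Ioi (0:ℝ), Complex.exp (θ * Complex.I) *
        Complex.exp (-Complex.exp (θ * Complex.I) * u) *
        ((-z * (((u ^ α : ℝ) : ℂ) * Complex.exp (α * (π + θ) * Complex.I))) ^ k / k.factorial)) =
      (((-z) ^ k / k.factorial * Real.Gamma (1 + α * k) : ℝ) : ℂ) *
        Complex.exp ((π * (α * k) : ℝ) * Complex.I) := by
    have := Gamma_mul_cexp_eq_integral hα hθ k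
    calc _ = ((-z : ℂ) ^ k / k.factorial) * (Complex.exp (π * α * k * Complex.I) *
          Real.Gamma (1 + α * k)) := by
          rw [this, ← MeasureTheory.integral_const_mul]
          congr 1 with u
          rw [mul_pow (-z : ℂ)]
          ring
      _ = _ := by push_cast; ring_nf
  rw [e, Complex.im_ofReal_mul, Complex.exp_ofReal_mul_I_im, div_mul_eq_div_mul_one_div, one_div,
    inv_Gamma_zero_sub (by positivity)]
  ring

/-- Polynomial decay of the Wright function along the negative half-line. -/
lemma exists_abs_wrightW_neg_le {α : ℝ} (hα : 0 < α) (hα1 : α < 1) :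
    ∃ C : ℝ, 0 ≤ C ∧ ∀ z : ℝ, 0 < z → |wrightW α 0 (-z)| ≤ C * z ^ (-1 / α) := by
  have hπ := pi_pos
  set θ : ℝ := -(α * (π / 2)) with hθdef
  have hθ : |θ| < π / 2 := by
    rw [hθdef, abs_neg, abs_of_pos (by positivity)]
    nlinarith
  have hr : 0 < Real.cos θ := cos_pos_of_mem_Ioo ⟨(abs_lt.1 hθ).1, (abs_lt.1 hθ).2⟩
  have hc : 0 < Real.cos (α * (π + θ)) := by
    have e : α * (π + θ) = π / 2 * (1 - (1 - α) ^ 2) := by rw [hθdef]; ring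
    have h1 : 0 < (1 - α) ^ 2 := by
      have : 0 < 1 - α := by linarith
      positivity
    have h2 : (1 - α) ^ 2 < 1 := by nlinarith
    apply cos_pos_of_mem_Ioo
    rw [e]
    constructor <;> nlinarith
  set c := Real.cos (α * (π + θ))
  refine ⟨c ^ (-1 / α) * Real.Gamma (1 / α + 1) / π, by positivity, fun z hz => ?_⟩
  rw [wrightW_neg_eq_integral hα hα1 hθ hz.le, abs_div, abs_neg, abs_of_pos hπ]
  have hint : IntegrableOn (fun u : ℝ => Real.exp (-(z * c) * u ^ α)) (Ioi 0) := by
    simpa using integrableOn_rpow_mul_exp_neg_mul_rpow (s := 0) (by norm_num) hα (mul_pos hz hc)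
  have hbound := norm_integral_le_of_norm_le (f := fun u : ℝ => Complex.exp (θ * Complex.I) *
        Complex.exp (-Complex.exp (θ * Complex.I) * u) *
        Complex.exp (-z * (((u ^ α : ℝ) : ℂ) * Complex.exp (α * (π + θ) * Complex.I)))) hint (by
    filter_upwards [ae_restrict_mem measurableSet_Ioi] with u hu
    have hu' : (0:ℝ) < u := hu
    have hw : (Complex.exp (α * (π + θ) * Complex.I)).re = c := by
      exact_mod_cast Complex.exp_ofReal_mul_I_re (α * (π + θ))
    rw [norm_mul, norm_mul, Complex.norm_exp_ofReal_mul_I, one_mul, Complex.norm_exp,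
      Complex.norm_exp]
    have e1 : (-Complex.exp (θ * Complex.I) * u).re = -(Real.cos θ * u) := by
      rw [Complex.re_mul_ofReal, Complex.neg_re, Complex.exp_ofReal_mul_I_re]; ring
    have e2 : (-(z : ℂ) * (((u ^ α : ℝ) : ℂ) * Complex.exp (α * (π + θ) * Complex.I))).re =
        -(z * c) * u ^ α := by
      rw [← Complex.ofReal_neg, Complex.re_ofReal_mul, Complex.re_ofReal_mul, hw]; ring
    rw [e1, e2]
    exact mul_le_of_le_one_left (Real.exp_pos _).le (Real.exp_le_one_iff.2 (by
      have := mul_pos hr hu'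
      linarith)))
  rw [integral_exp_neg_mul_rpow hα (mul_pos hz hc), mul_rpow hz.le hc.le] at hbound
  rw [div_mul_eq_mul_div]
  gcongr
  calc _ ≤ _ := Complex.abs_im_le_norm _
    _ ≤ _ := hbound
    _ = _ := by ring

lemma measurable_wrightW (β δ : ℝ) : Measurable (wrightW β δ) :=
  Measurable.tsum fun k => by fun_prop

section Convolution

variable {P : Type*} [MeasurableSpace P]

lemma measurable_laplaceConv_s16 {f g : P → ℝ → ℝ} (hf : Measurable fun q : P × ℝ => f q.1 q.2)
    (hg : Measurable fun q : P × ℝ => g q.1 q.2) :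
    Measurable fun q : P × ℝ => laplaceConv (f q.1) (g q.1) q.2 := by
  have hF : Measurable fun q : (P × ℝ) × ℝ => f q.1.1 q.2 * g q.1.1 (q.1.2 - q.2) :=
    (hf.comp (by fun_prop : Measurable fun q : (P × ℝ) × ℝ => (q.1.1, q.2))).mul
      (hg.comp (by fun_prop : Measurable fun q : (P × ℝ) × ℝ => (q.1.1, q.1.2 - q.2)))
  have hS {a b : P × ℝ → ℝ} (ha : Measurable a) (hb : Measurable b) :
      Measurable fun q : P × ℝ => ∫ τ in Ioc (a q) (b q), f q.1 τ * g q.1 (q.2 - τ) := by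
    have hset : MeasurableSet {q : (P × ℝ) × ℝ | a q.1 < q.2 ∧ q.2 ≤ b q.1} :=
      (measurableSet_lt (ha.comp measurable_fst) measurable_snd).inter
        (measurableSet_le measurable_snd (hb.comp measurable_fst))
    have := (hF.indicator hset).stronglyMeasurable.integral_prod_right' (ν := volume)
    convert! this.measurable using 2 with q
    rw [← MeasureTheory.integral_indicator measurableSet_Ioc]
    rfl
  simp only [laplaceConv, intervalIntegral]
  exact (hS measurable_const measurable_snd).sub (hS measurable_snd measurable_const)

lemma measurable_iterConv_s16 (n : ℕ) {h : P → Fin (n + 1) → ℝ → ℝ}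
    (hh : ∀ j, Measurable fun q : P × ℝ => h q.1 j q.2) :
    Measurable fun q : P × ℝ => iterConv n (h q.1) q.2 := by
  induction n with
  | zero => exact hh 0
  | succ n ih =>
    exact measurable_laplaceConv_s16 (f := fun p => iterConv n fun i => h p i.castSucc)
      (g := fun p => h p (Fin.last (n + 1)))
      (ih (h := fun p i => h p i.castSucc) fun j => hh j.castSucc) (hh (Fin.last (n + 1)))

end Convolution

lemma abs_iterConv_le (n : ℕ) {t : ℝ} (ht : 0 ≤ t) {h : Fin (n + 1) → ℝ → ℝ}
    {B : Fin (n + 1) → ℝ} (hB : ∀ j, ∀ τ ∈ Icc 0 t, |h j τ| ≤ B j) :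
    ∀ τ ∈ Icc 0 t, |iterConv n h τ| ≤ t ^ n * ∏ j, B j := by
  have hB0 : ∀ j, 0 ≤ B j := fun j => (abs_nonneg _).trans (hB j 0 ⟨le_rfl, ht⟩)
  induction n with
  | zero => simpa [iterConv] using hB 0
  | succ n ih =>
    intro τ hτ
    have ih' := ih (fun j => hB j.castSucc) fun j => hB0 j.castSucc
    have hprod : 0 ≤ t ^ n * ∏ j : Fin (n + 1), B j.castSucc :=
      mul_nonneg (pow_nonneg ht _) (Finset.prod_nonneg fun j _ => hB0 _)
    have := intervalIntegral.norm_integral_le_of_norm_le_const (a := 0) (b := τ)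
      (f := fun σ => iterConv n (fun i => h i.castSucc) σ * h (Fin.last (n + 1)) (τ - σ))
      (C := (t ^ n * ∏ j : Fin (n + 1), B j.castSucc) * B (Fin.last (n + 1))) (by
        intro σ hσ
        rw [uIoc_of_le hτ.1] at hσ
        rw [norm_mul]
        exact mul_le_mul (ih' σ ⟨hσ.1.le, hσ.2.trans hτ.2⟩)
          (hB _ _ ⟨sub_nonneg.2 hσ.2, by linarith [hσ.1, hτ.2]⟩) (norm_nonneg _) hprod)
    rw [sub_zero, abs_of_nonneg hτ.1] at this
    calc |iterConv (n + 1) h τ| ≤ _ := this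
      _ ≤ ((t ^ n * ∏ j : Fin (n + 1), B j.castSucc) * B (Fin.last (n + 1))) * t :=
        mul_le_mul_of_nonneg_left hτ.2 (mul_nonneg hprod (hB0 _))
      _ = _ := by rw [Fin.prod_univ_castSucc B]; ring

lemma measurable_Sconv (n : ℕ) (μ : ℝ) (α lam : Fin (n + 1) → ℝ) (t : ℝ) :
    Measurable fun p : ℝ => Sconv n μ α (fun j => lam j * p) t := by
  have h := measurable_iterConv_s16 (P := ℝ) n
    (h := fun p j t => t ^ ((if j = 0 then μ else 0) - 1) *
      wrightW (α j) (if j = 0 then μ else 0) (-(lam j * p) * t ^ (-(α j)))) (fun j =>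
      Measurable.mul (by fun_prop) ((measurable_wrightW _ _).comp (by fun_prop)))
  exact h.comp (by fun_prop : Measurable fun p : ℝ => (p, t))

lemma exists_abs_Sconv_le (n : ℕ) {α lam : Fin (n + 1) → ℝ} (hpos : ∀ j, 0 < α j)
    (hlt1 : ∀ j, α j < 1) (hlam : ∀ j, 0 < lam j) {t : ℝ} (ht : 0 ≤ t) :
    ∃ C M : ℝ, 1 < M ∧
      ∀ p, 0 < p → |Sconv n 0 α (fun j => lam j * p) t| ≤ C * p ^ (-M) := by
  choose C hC0 hC using fun j => exists_abs_wrightW_neg_le (hpos j) (hlt1 j)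
  refine ⟨t ^ n * ∏ j, C j * lam j ^ (-1 / α j), ∑ j, 1 / α j, ?_, fun p hp => ?_⟩
  · calc (1:ℝ) < 1 / α 0 := (one_lt_div (hpos 0)).2 (hlt1 0)
      _ ≤ _ := Finset.single_le_sum (f := fun j => 1 / α j)
        (fun j _ => (one_div_pos.2 (hpos j)).le) (Finset.mem_univ 0)
  · have hB := abs_iterConv_le n ht (h := fun j t => t ^ ((if j = 0 then (0:ℝ) else 0) - 1) *
      wrightW (α j) (if j = 0 then 0 else 0) (-(lam j * p) * t ^ (-(α j))))
      (B := fun j => C j * lam j ^ (-1 / α j) * p ^ (-(1 / α j))) (fun j τ hτ => by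
        simp only [ite_self, zero_sub]
        rcases hτ.1.eq_or_lt with rfl | h0
        · rw [zero_rpow (by norm_num), zero_mul, abs_zero]
          have := hC0 j
          have := (hlam j).le
          positivity
        · have hlp := mul_pos (hlam j) hp
          have hz := mul_pos hlp (rpow_pos_of_pos h0 (-(α j)))
          have h := hC j _ hz
          have e : (τ ^ (-(α j))) ^ (-1 / α j) = τ := by
            rw [← rpow_mul h0.le, show -(α j) * (-1 / α j) = 1 by
              have := (hpos j).ne'; field_simp, rpow_one]
          rw [mul_rpow hlp.le (rpow_nonneg h0.le _), e, mul_rpow (hlam j).le hp.le] at h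
          rw [abs_mul, abs_of_pos (rpow_pos_of_pos h0 _), rpow_neg_one, neg_mul,
            inv_mul_le_iff₀ h0]
          refine h.trans_eq ?_
          rw [neg_div]
          ring) t ⟨ht, le_rfl⟩
    refine hB.trans_eq ?_
    rw [Finset.prod_mul_distrib, ← rpow_sum_of_pos hp, Finset.sum_neg_distrib, mul_assoc]

lemma integrableOn_rpow_neg_mul_exp_neg_div {a c : ℝ} (ha : 1 < a) (hc : 0 < c) :
    IntegrableOn (fun p : ℝ => p ^ (-a) * Real.exp (-c / p)) (Ioi 0) := by
  have h := integrableOn_rpow_mul_exp_neg_mul_rpow (s := a - 2) (by linarith) one_pos hc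
  refine ((integrableOn_Ioi_comp_rpow_iff' _ (by norm_num : (-1:ℝ) ≠ 0)).2 h).congr_fun
    (fun p hp => ?_) measurableSet_Ioi
  have hp' : (0:ℝ) < p := hp
  simp only [smul_eq_mul, rpow_one]
  rw [← mul_assoc, ← rpow_mul hp'.le, ← rpow_add hp', rpow_neg_one, div_eq_mul_inv]
  ring_nf

/-- Differentiation under the integral sign against the Gaussian kernel, for weights decaying at
infinity and growing at most polynomially at the origin. -/
lemma hasDerivAt_integral_rpow_mul_exp_neg_sq_div {S : ℝ → ℝ} (hS : Measurable S) {C M : ℝ}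
    (hM : 1 < M) (hSC : ∀ p, 0 < p → |S p| ≤ C * p ^ (-M)) {x : ℝ} (hx : x ≠ 0) :
    HasDerivAt (fun y : ℝ => ∫ p in Ioi (0:ℝ),
        p ^ (-(1/2 : ℝ)) * Real.exp (-(y ^ 2) / (4 * p)) * S p)
      (∫ p in Ioi (0:ℝ), -(x / 2) *
        (p ^ (-(3/2 : ℝ)) * Real.exp (-(x ^ 2) / (4 * p)) * S p)) x := by
  have hx0 : 0 < |x| := abs_pos.2 hx
  have hx2 : 0 < x ^ 2 := by positivity
  refine (_root_.hasDerivAt_integral_of_dominated_loc_of_deriv_le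
    (F := fun (y p : ℝ) => p ^ (-(1/2 : ℝ)) * Real.exp (-(y ^ 2) / (4 * p)) * S p)
    (F' := fun (y p : ℝ) => -(y / 2) *
      (p ^ (-(3/2 : ℝ)) * Real.exp (-(y ^ 2) / (4 * p)) * S p))
    (s := {y : ℝ | |x| / 2 < |y| ∧ |y| < 2 * |x|})
    (bound := fun p => |x| * C * (p ^ (-(M + 3/2)) * Real.exp (-(x ^ 2 / 16) / p)))
    ?_ ?_ ?_ ?_ ?_ ?_ ?_).2
  · exact ((isOpen_lt continuous_const continuous_abs).inter
      (isOpen_lt continuous_abs continuous_const)).mem_nhds ⟨half_lt_self hx0, lt_two_mul_self hx0⟩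
  · exact Eventually.of_forall fun y => Measurable.aestronglyMeasurable (by fun_prop)
  · refine ((integrableOn_rpow_neg_mul_exp_neg_div (a := M + 1/2) (c := x ^ 2 / 4) (by linarith)
      (by positivity)).const_mul C).mono' (Measurable.aestronglyMeasurable (by fun_prop)) ?_
    filter_upwards [ae_restrict_mem measurableSet_Ioi] with p hp
    have hp' : (0:ℝ) < p := hp
    rw [norm_mul, Real.norm_of_nonneg (by positivity), Real.norm_eq_abs]
    calc _ ≤ p ^ (-(1/2 : ℝ)) * Real.exp (-(x ^ 2) / (4 * p)) * (C * p ^ (-M)) := by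
          gcongr; exact hSC p hp'
      _ = C * ((p ^ (-M) * p ^ (-(1/2 : ℝ))) * Real.exp (-(x ^ 2) / (4 * p))) := by ring
      _ = _ := by
          rw [← rpow_add hp', ← neg_add, neg_div, neg_div, div_div]
  · exact Measurable.aestronglyMeasurable (by fun_prop)
  · filter_upwards [ae_restrict_mem measurableSet_Ioi] with p hp y hy
    have hp' : (0:ℝ) < p := hp
    obtain ⟨hy1, hy2⟩ := hy
    have hy3 : x ^ 2 / 4 ≤ y ^ 2 := by
      rw [← sq_abs x, ← sq_abs y]
      nlinarith
    have hC : 0 ≤ C := by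
      have := (abs_nonneg _).trans (hSC 1 one_pos)
      simpa using this
    rw [norm_mul, norm_mul (_ * _), Real.norm_of_nonneg (by positivity : 0 ≤ p ^ (-(3/2 : ℝ)) * _),
      norm_neg, Real.norm_eq_abs, Real.norm_eq_abs, abs_div, abs_two]
    calc _ ≤ |x| * (p ^ (-(3/2 : ℝ)) * Real.exp (-(x ^ 2 / 16) / p) * (C * p ^ (-M))) := by
          have e : -(y ^ 2) / (4 * p) ≤ -(x ^ 2 / 16) / p := by
            rw [div_le_div_iff₀ (by positivity) hp']
            nlinarith
          have := hSC p hp'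
          gcongr
          linarith
      _ = |x| * C * ((p ^ (-M) * p ^ (-(3/2 : ℝ))) * Real.exp (-(x ^ 2 / 16) / p)) := by ring
      _ = _ := by rw [← rpow_add hp', ← neg_add]
  · exact (integrableOn_rpow_neg_mul_exp_neg_div (by linarith) (by positivity)).const_mul _
  · filter_upwards [ae_restrict_mem measurableSet_Ioi] with p hp y _
    have hp' : (0:ℝ) < p := hp
    have h1 : HasDerivAt (fun y : ℝ => -(y ^ 2) / (4 * p)) (-(2 * y) / (4 * p)) y := by
      simpa using ((hasDerivAt_pow 2 y).neg.div_const (4 * p))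
    refine ((h1.exp.const_mul (p ^ (-(1/2 : ℝ)))).mul_const (S p)).congr_deriv ?_
    have e : p ^ (-(3/2 : ℝ)) = p ^ (-(1/2 : ℝ)) / p := by
      rw [← rpow_sub_one hp'.ne']; norm_num
    rw [e]
    field_simp
    ring

/-- Integral representation of the spatial derivative of `E`: for `x ≠ 0`,
`t > 0`, `E` is differentiable in `x` with
`E_x(x,t) = -(x/2)(4π)^{-1/2} ∫₀^∞ p^{-3/2} e^{-x²/(4p)} S⁰_m(t; -λ₁p,…,-λ_m p; -α₁,…,-α_m) dp`. -/
theorem kerE_hasDerivAt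
    (m : ℕ) (α lam : Fin (m + 1) → ℝ)
    (hmono : StrictMono α) (hpos : ∀ j, 0 < α j) (hlt1 : ∀ j, α j < 1)
    (hlam : ∀ j, 0 < lam j)
    (x t : ℝ) (hx : x ≠ 0) (ht : 0 < t) :
    HasDerivAt (fun y => kerE m α lam y t)
      (-(x / 2) * (4 * Real.pi) ^ (-(1/2 : ℝ)) *
        ∫ p in Set.Ioi (0:ℝ),
          p ^ (-(3/2 : ℝ)) * Real.exp (-(x ^ 2) / (4 * p)) *
            Sconv m 0 α (fun j => lam j * p) t) x := by
  obtain ⟨C, M, hM, hC⟩ := exists_abs_Sconv_le m hpos hlt1 hlam ht.le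
  have h := (hasDerivAt_integral_rpow_mul_exp_neg_sq_div (measurable_Sconv m 0 α lam t) hM hC
    hx).const_mul ((4 * Real.pi) ^ (-(1/2 : ℝ)))
  simp only [kerE, Gam1, sq_abs]
  refine h.congr_deriv ?_
  rw [MeasureTheory.integral_const_mul]
  ring
end
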